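/- Consider the second order ODE y'' = B(x,y,y') with B real-analytic in a neighborhood of 0 ∈ ℝ³. Then there exists a local diffeomorphism Φ = (φ,ψ): (x,y) ↦ (X,Y) of a neighborhood of 0 ∈ ℝ² fixing the origin, and a function B*(X,Y,P) real-analytic near 0 ∈ ℝ³, such that the transformed equation is Y'' = B*(X,Y,Y') — i.e. for every solution y(x) of y''=B(x,y,y') with graph near 0 and with (d/dx)φ(x,y(x)) ≠ 0, the function Y(X) determined by Y(φ(x,y(x))) = ψ(x,y(x)) satisfies Y''(X) = B*(X, Y(X), Y'(X)) — and the Taylor expansion B*(X,Y,P) = Σ_{i,j≥0} B_{ij}(Y) X^i P^j satisfies B_{i0} = B_{i1} = 0 for all i ≥ 0, and B_{02} = B_{03} = B_{12} = B_{13} = 0; equivalently, B* = P⁴ Σ_{j≥0} (B_{0,j+4}(Y) + X B_{1,j+4}(Y)) P^j + Σ_{i≥2, j≥2} B_{ij}(Y) X^i P^j. -/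

import Mathlib

open Set Filter Topology

namespace NF

section AnProd
variable {E F G : Type*} [NormedAddCommGroup E] [NormedSpace ℝ E]
  [NormedAddCommGroup F] [NormedSpace ℝ F] [NormedAddCommGroup G] [NormedSpace ℝ G]

@[fun_prop]
theorem an_fst (p : E × F) : AnalyticAt ℝ (fun z : E × F => z.1) p := analyticAt_fst

@[fun_prop]
theorem an_snd (p : E × F) : AnalyticAt ℝ (fun z : E × F => z.2) p := analyticAt_snd

@[fun_prop]
theorem an_fst' {f : G → E × F} {p : G} (hf : AnalyticAt ℝ f p) :
    AnalyticAt ℝ (fun z => (f z).1) p := analyticAt_fst.comp hf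

@[fun_prop]
theorem an_snd' {f : G → E × F} {p : G} (hf : AnalyticAt ℝ f p) :
    AnalyticAt ℝ (fun z => (f z).2) p := analyticAt_snd.comp hf

end AnProd

section ODE
variable {E : Type*} [NormedAddCommGroup E] [NormedSpace ℝ E]

abbrev CI (E : Type*) [TopologicalSpace E] := C(unitInterval, E)

/-- pointwise multilinear map on continuous functions -/
noncomputable def nemTerm {n : ℕ} (p : E [×n]→L[ℝ] E) : (CI E) [×n]→L[ℝ] (CI E) :=
  MultilinearMap.mkContinuous
    { toFun := fun u => ⟨fun s => p (fun i => u i s), by fun_prop⟩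
      map_update_add' := by
        intro _ m i x y
        ext s
        have h : ∀ z : CI E, (fun j => (Function.update m i z j) s)
            = Function.update (fun j => m j s) i (z s) := by
          intro z; ext j
          by_cases hj : j = i
          · subst hj; simp
          · simp [hj]
        simp [h]
      map_update_smul' := by
        intro _ m i c x
        ext s
        have h : ∀ z : CI E, (fun j => (Function.update m i z j) s)
            = Function.update (fun j => m j s) i (z s) := by
          intro z; ext j
          by_cases hj : j = i
          · subst hj; simp
          · simp [hj]
        simp [h] }
    ‖p‖ (by
      intro m
      rw [ContinuousMap.norm_le _ (by positivity)]
      intro s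
      refine (p.le_opNorm _).trans ?_
      gcongr with i
      exact (m i).norm_coe_le_norm s)

lemma nemTerm_apply {n : ℕ} (p : E [×n]→L[ℝ] E) (u : Fin n → CI E) (s : unitInterval) :
    nemTerm p u s = p (fun i => u i s) := rfl

lemma norm_nemTerm_le {n : ℕ} (p : E [×n]→L[ℝ] E) : ‖nemTerm p‖ ≤ ‖p‖ :=
  MultilinearMap.mkContinuous_norm_le _ (norm_nonneg _) _

/-- Nemytskii operator -/
lemma exists_nem [CompleteSpace E] {f : E → E} (hf : AnalyticAt ℝ f 0) :
    ∃ N : CI E → CI E, AnalyticAt ℝ N 0 ∧ ∃ r > 0, ∀ u : CI E, ‖u‖ < r → ∀ s, N u s = f (u s) := by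
  obtain ⟨p, r, hp⟩ := hf
  let P : FormalMultilinearSeries ℝ (CI E) (CI E) := fun n => nemTerm (p n)
  have hrad : p.radius ≤ P.radius := by
    apply FormalMultilinearSeries.radius_le_of_le
    intro n
    exact norm_nemTerm_le _
  have hr : r ≤ P.radius := hp.r_le.trans hrad
  have hP0 : 0 < P.radius := hp.r_pos.trans_le hr
  have hP := P.hasFPowerSeriesOnBall hP0
  refine ⟨P.sum, hP.analyticAt, ?_⟩
  obtain ⟨r', hr'0, hr'⟩ := ENNReal.lt_iff_exists_nnreal_btwn.1 hp.r_pos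
  refine ⟨r', by exact_mod_cast hr'0, fun u hu s => ?_⟩
  have hur : (‖u‖₊ : ENNReal) < r := by
    refine lt_trans ?_ hr'
    exact_mod_cast hu
  have h1 : HasSum (fun n => P n fun _ => u) (P.sum u) := by
    have := hP.hasSum (y := u) (by
      simp only [Metric.mem_eball, edist_zero_right]
      exact lt_of_lt_of_le hur hr)
    simpa using this
  have h2 : HasSum (fun n => (P n fun _ => u) s) (P.sum u s) := by
    exact h1.map (ContinuousMap.evalCLM ℝ s) (ContinuousMap.evalCLM ℝ s).continuous
  have h3 : HasSum (fun n => p n fun _ => u s) (f (0 + u s)) := by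
    apply hp.hasSum
    simp only [Metric.mem_eball, edist_zero_right]
    refine lt_of_le_of_lt ?_ hur
    exact_mod_cast u.norm_coe_le_norm s
  rw [zero_add] at h3
  exact h2.unique h3

/-- integration operator -/
noncomputable def intOp [CompleteSpace E] : CI E →L[ℝ] CI E :=
  LinearMap.mkContinuous
    { toFun := fun u => ⟨fun s => ∫ q in (0:ℝ)..s, IccExtend zero_le_one u q, by
        have : Continuous (fun s : ℝ => ∫ q in (0:ℝ)..s, IccExtend zero_le_one u q) :=
          intervalIntegral.continuous_primitive
            (fun a b => (u.continuous.Icc_extend' (h := zero_le_one)).intervalIntegrable a b) 0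
        exact this.comp continuous_subtype_val⟩
      map_add' := by
        intro u v
        ext s
        simp only [ContinuousMap.coe_mk, ContinuousMap.add_apply]
        rw [← intervalIntegral.integral_add
          ((u.continuous.Icc_extend' (h := zero_le_one)).intervalIntegrable _ _)
          ((v.continuous.Icc_extend' (h := zero_le_one)).intervalIntegrable _ _)]
        rfl
      map_smul' := by
        intro c u
        ext s
        simp only [ContinuousMap.coe_mk, ContinuousMap.smul_apply, RingHom.id_apply]
        rw [← intervalIntegral.integral_smul]
        rfl }
    1 (by
      intro u
      rw [ContinuousMap.norm_le _ (by positivity)]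
      intro s
      have := intervalIntegral.norm_integral_le_of_norm_le_const (a := (0:ℝ)) (b := s)
        (f := IccExtend zero_le_one u) (C := ‖u‖) (fun x _ => u.norm_coe_le_norm _)
      refine this.trans ?_
      have h0 := s.2.1
      have h1 := s.2.2
      rw [sub_zero, abs_of_nonneg h0, one_mul]
      nlinarith [norm_nonneg u])

lemma intOp_apply [CompleteSpace E] (u : CI E) (s : unitInterval) :
    intOp u s = ∫ q in (0:ℝ)..s, IccExtend zero_le_one u q := rfl

end ODE
end NF

namespace NF

section ODE2
variable {E : Type*} [NormedAddCommGroup E] [NormedSpace ℝ E]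

/-- the linearised equivalence -/
noncomputable def linEquiv (c : CI E) : (ℝ × E × CI E) ≃L[ℝ] (ℝ × E × CI E) :=
  ContinuousLinearEquiv.equivOfInverse
    ((ContinuousLinearMap.fst ℝ ℝ (E × CI E)).prod
      (((ContinuousLinearMap.fst ℝ E (CI E)).comp (ContinuousLinearMap.snd ℝ ℝ (E × CI E))).prod
        ((ContinuousLinearMap.snd ℝ E (CI E)).comp (ContinuousLinearMap.snd ℝ ℝ (E × CI E))
          - (ContinuousLinearMap.const ℝ unitInterval).comp
              ((ContinuousLinearMap.fst ℝ E (CI E)).comp (ContinuousLinearMap.snd ℝ ℝ (E × CI E)))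
          - (ContinuousLinearMap.fst ℝ ℝ (E × CI E)).smulRight c)))
    ((ContinuousLinearMap.fst ℝ ℝ (E × CI E)).prod
      (((ContinuousLinearMap.fst ℝ E (CI E)).comp (ContinuousLinearMap.snd ℝ ℝ (E × CI E))).prod
        ((ContinuousLinearMap.snd ℝ E (CI E)).comp (ContinuousLinearMap.snd ℝ ℝ (E × CI E))
          + (ContinuousLinearMap.const ℝ unitInterval).comp
              ((ContinuousLinearMap.fst ℝ E (CI E)).comp (ContinuousLinearMap.snd ℝ ℝ (E × CI E)))
          + (ContinuousLinearMap.fst ℝ ℝ (E × CI E)).smulRight c)))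
    (by rintro ⟨a, b, u⟩; simp; try abel)
    (by rintro ⟨a, b, u⟩; simp; try abel)

lemma scaling [CompleteSpace E] (u : CI E) (l : unitInterval) (s : unitInterval) :
    (l : ℝ) • intOp (u.comp ⟨fun r => l * r, by fun_prop⟩) s = intOp u (l * s) := by
  rw [intOp_apply, intOp_apply]
  have h := intervalIntegral.smul_integral_comp_mul_left (a := (0:ℝ)) (b := s)
    (fun q => IccExtend zero_le_one u q) (l : ℝ)
  rw [mul_zero] at h
  rw [show ((l * s : unitInterval) : ℝ) = (l:ℝ) * s from rfl, ← h]
  congr 1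
  apply intervalIntegral.integral_congr
  intro q hq
  rw [uIcc_of_le s.2.1] at hq
  have hq' : q ∈ Icc (0:ℝ) 1 := ⟨hq.1, hq.2.trans s.2.2⟩
  have hlq : (l:ℝ) * q ∈ Icc (0:ℝ) 1 :=
    ⟨mul_nonneg l.2.1 hq.1, by nlinarith [l.2.1, l.2.2, hq'.1, hq'.2]⟩
  change IccExtend zero_le_one _ q = IccExtend zero_le_one _ ((l:ℝ) * q)
  rw [IccExtend_of_mem _ _ hq', IccExtend_of_mem _ _ hlq]
  rfl

theorem ode0 [CompleteSpace E] {f : E → E} (hf : AnalyticAt ℝ f 0) :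
    ∃ S : ℝ × E → E, AnalyticAt ℝ S 0 ∧ S 0 = 0 ∧ (∀ᶠ e in 𝓝 (0:E), S (0, e) = e) ∧
      ∀ᶠ z in 𝓝 (0 : ℝ × E), HasDerivAt (fun t => S (t, z.2)) (f (S z)) z.1 := by
  obtain ⟨N, hN, r, hr, hNr⟩ := exists_nem hf
  let cst : E →L[ℝ] CI E := ContinuousLinearMap.const ℝ unitInterval
  have hcst : ∀ e s, cst e s = e := fun e s => rfl
  let H : ℝ × E × CI E → ℝ × E × CI E := fun z =>
    (z.1, z.2.1, z.2.2 - cst z.2.1 - z.1 • intOp (N z.2.2))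
  have hN' : AnalyticAt ℝ (fun z : ℝ × E × CI E => intOp (N z.2.2)) 0 := by
    have h1 : AnalyticAt ℝ (fun z : ℝ × E × CI E => z.2.2) 0 := by fun_prop
    have h2 : AnalyticAt ℝ (fun z : ℝ × E × CI E => N z.2.2) 0 := AnalyticAt.comp (g := N) hN h1
    exact (intOp.analyticAt _).comp h2
  have hc : AnalyticAt ℝ (fun z : ℝ × E × CI E => cst z.2.1) 0 := by
    have h1 : AnalyticAt ℝ (fun z : ℝ × E × CI E => z.2.1) 0 := by fun_prop
    exact (cst.analyticAt _).comp h1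
  have hH : AnalyticAt ℝ H 0 := by
    refine AnalyticAt.prod (by fun_prop) (AnalyticAt.prod (by fun_prop) ?_)
    refine (AnalyticAt.sub (by fun_prop) hc).sub (AnalyticAt.smul (an_fst (0 : ℝ × E × CI E)) hN')
  have hH0 : H 0 = 0 := by simp [H]
  have hHd : HasFDerivAt H (linEquiv (intOp (N 0)) : _ →L[ℝ] (ℝ × E × CI E)) 0 := by
    have hA : HasFDerivAt (fun z : ℝ × E × CI E => z.1)
      (ContinuousLinearMap.fst ℝ ℝ (E × CI E)) 0 := hasFDerivAt_fst
    have hB : HasFDerivAt (fun z : ℝ × E × CI E => z.2.1)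
      ((ContinuousLinearMap.fst ℝ E (CI E)).comp (ContinuousLinearMap.snd ℝ ℝ (E × CI E))) 0 :=
      ((ContinuousLinearMap.fst ℝ E (CI E)).comp
        (ContinuousLinearMap.snd ℝ ℝ (E × CI E))).hasFDerivAt
    have hC : HasFDerivAt (fun z : ℝ × E × CI E => z.2.2)
      ((ContinuousLinearMap.snd ℝ E (CI E)).comp (ContinuousLinearMap.snd ℝ ℝ (E × CI E))) 0 :=
      ((ContinuousLinearMap.snd ℝ E (CI E)).comp
        (ContinuousLinearMap.snd ℝ ℝ (E × CI E))).hasFDerivAt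
    have hD : HasFDerivAt (fun z : ℝ × E × CI E => cst z.2.1)
      (cst.comp ((ContinuousLinearMap.fst ℝ E (CI E)).comp
        (ContinuousLinearMap.snd ℝ ℝ (E × CI E)))) 0 :=
      (cst.comp ((ContinuousLinearMap.fst ℝ E (CI E)).comp
        (ContinuousLinearMap.snd ℝ ℝ (E × CI E)))).hasFDerivAt
    have hE := hA.smul hN'.differentiableAt.hasFDerivAt
    have := hA.prodMk (hB.prodMk ((hC.sub hD).sub hE))
    refine this.congr_fderiv ?_
    refine ContinuousLinearMap.ext fun z => ?_
    simp [linEquiv, cst]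
  have hHc : ContDiffAt ℝ ⊤ H 0 := hH.contDiffAt
  let e := hHc.toOpenPartialHomeomorph H hHd (by simp)
  have he : ∀ z, e z = H z := fun z => rfl
  have hes : (0 : ℝ × E × CI E) ∈ e.source := hHc.mem_toOpenPartialHomeomorph_source hHd (by simp)
  have het : (0 : ℝ × E × CI E) ∈ e.target := by
    have := hHc.image_mem_toOpenPartialHomeomorph_target hHd (by simp)
    rwa [hH0] at this
  have hes0 : e.symm 0 = 0 := by
    have := e.left_inv hes
    rwa [he, hH0] at this
  have hsym : AnalyticAt ℝ e.symm 0 := by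
    have := hHc.to_localInverse hHd (by simp)
    rw [hH0] at this
    exact ContDiffAt.analyticAt this
  let ι : ℝ × E → ℝ × E × CI E := fun z => (z.1, z.2, 0)
  have hι : AnalyticAt ℝ ι 0 := by
    refine AnalyticAt.prod (by fun_prop) (AnalyticAt.prod (by fun_prop) analyticAt_const)
  have hι0 : ι 0 = 0 := rfl
  have hsι : AnalyticAt ℝ (fun z => e.symm (ι z)) 0 :=
    AnalyticAt.comp (g := e.symm) (by rwa [hι0]) hι
  let w : ℝ × E → CI E := fun z => (e.symm (ι z)).2.2
  have hw : AnalyticAt ℝ w 0 := by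
    exact an_snd' (an_snd' hsι)
  have hw0 : w 0 = 0 := by simp [w, hι0, hes0]
  -- fixed point equation
  have hfix : ∀ᶠ z in 𝓝 (0 : ℝ × E), w z = cst z.2 + z.1 • intOp (N (w z)) := by
    have h1 : ∀ᶠ z in 𝓝 (0 : ℝ × E), ι z ∈ e.target :=
      hι.continuousAt.eventually_mem (by rw [hι0]; exact e.open_target.mem_nhds het)
    filter_upwards [h1] with z hz
    have h2 := e.right_inv hz
    rw [he] at h2
    have ha : (e.symm (ι z)).1 = z.1 := congrArg Prod.fst h2
    have hb : (e.symm (ι z)).2.1 = z.2 := congrArg (fun q => q.2.1) h2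
    have hc : (e.symm (ι z)).2.2 - cst (e.symm (ι z)).2.1
      - (e.symm (ι z)).1 • intOp (N (e.symm (ι z)).2.2) = 0 := congrArg (fun q => q.2.2) h2
    rw [ha, hb] at hc
    rw [sub_sub, sub_eq_zero] at hc
    exact hc
  -- uniqueness
  have huniq : ∃ ρ > 0, ∀ (z : ℝ × E) (v : CI E), ‖z‖ < ρ → ‖v‖ < ρ →
      v = cst z.2 + z.1 • intOp (N v) → v = w z := by
    obtain ⟨ρ, hρ, hb⟩ := Metric.mem_nhds_iff.1 (e.open_source.mem_nhds hes)
    refine ⟨ρ, hρ, fun z v hz hv h => ?_⟩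
    have hm : (z.1, z.2, v) ∈ e.source := by
      apply hb
      rw [mem_ball_zero_iff, Prod.norm_def, Prod.norm_def]
      simp only
      refine max_lt ((norm_fst_le z).trans_lt hz) (max_lt ((norm_snd_le z).trans_lt hz) hv)
    have hHz : e (z.1, z.2, v) = ι z := by
      rw [he]
      simp only [H, ι]
      rw [sub_sub, ← h, sub_self]
    have := e.left_inv hm
    rw [hHz] at this
    simp only [w, this]
  obtain ⟨ρ, hρ, huniq⟩ := huniq
  let S : ℝ × E → E := fun z => w z 1
  have hS : AnalyticAt ℝ S 0 :=
    AnalyticAt.comp (g := ContinuousMap.evalCLM (M := E) ℝ (1 : unitInterval))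
      (ContinuousLinearMap.analyticAt _ _) hw
  have hS0 : S 0 = 0 := by simp [S, hw0]
  have hwsmall : ∀ᶠ z in 𝓝 (0 : ℝ × E), ‖w z‖ < min ρ r := by
    have := hw.continuousAt.norm
    rw [ContinuousAt, hw0, norm_zero] at this
    exact this.eventually_lt_const (lt_min hρ hr)
  have hev := hfix.and (hwsmall.and ((hS.eventually_analyticAt).and
    (hS.continuousAt.eventually_mem (by
      rw [hS0]; exact hf.eventually_analyticAt))))
  obtain ⟨η, hη, hball⟩ := Metric.eventually_nhds_iff_ball.1 hev
  -- integral equation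
  have key : ∀ z : ℝ × E, ‖z‖ < min η ρ →
      S z = z.2 + ∫ t in (0:ℝ)..z.1, f (S (t, z.2)) := by
    intro z hz
    obtain ⟨hzf, hzw, -, -⟩ := hball z (by
      rw [mem_ball_zero_iff]; exact hz.trans_le (min_le_left _ _))
    have hsc : ∀ l : unitInterval, S (l * z.1, z.2) = w z l := by
      intro l
      let v : CI E := (w z).comp ⟨fun r => l * r, by fun_prop⟩
      have hv : ‖v‖ ≤ ‖w z‖ := by
        rw [ContinuousMap.norm_le _ (norm_nonneg _)]
        intro s
        exact (w z).norm_coe_le_norm _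
      have hNv : N v = (N (w z)).comp ⟨fun r => l * r, by fun_prop⟩ := by
        ext s
        rw [hNr v (hv.trans_lt (hzw.trans_le (min_le_right _ _))), ContinuousMap.comp_apply,
          ContinuousMap.comp_apply, hNr (w z) (hzw.trans_le (min_le_right _ _))]
      have hfv : v = cst z.2 + (l * z.1) • intOp (N v) := by
        ext s
        have h1 : v s = (cst z.2 + z.1 • intOp (N (w z))) (l * s) := by
          rw [← hzf]; rfl
        rw [h1]
        simp only [ContinuousMap.add_apply, hcst, ContinuousMap.smul_apply]
        rw [mul_comm (l : ℝ), mul_smul, hNv, scaling]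
      have := huniq (l * z.1, z.2) v (by
        refine lt_of_le_of_lt ?_ (hz.trans_le (min_le_right _ _))
        rw [Prod.norm_def, Prod.norm_def]
        refine max_le_max ?_ le_rfl
        simp only [norm_mul]
        have h1 : ‖(l:ℝ)‖ ≤ 1 := by
          rw [Real.norm_eq_abs, abs_of_nonneg l.2.1]; exact l.2.2
        nlinarith [norm_nonneg z.1]) (hv.trans_lt (hzw.trans_le (min_le_left _ _))) hfv
      simp only [S]
      rw [← this]
      change w z (l * 1) = _
      rw [mul_one]
    have h1 : S z = z.2 + z.1 • intOp (N (w z)) 1 := by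
      have := congrArg (fun u : CI E => u 1) hzf
      exact this
    rw [h1, intOp_apply]
    congr 1
    have h := intervalIntegral.smul_integral_comp_mul_left (a := (0:ℝ)) (b := 1)
      (fun t => f (S (t, z.2))) z.1
    rw [mul_zero, mul_one] at h
    rw [← h]
    congr 1
    apply intervalIntegral.integral_congr
    intro q hq
    rw [show ((1 : unitInterval) : ℝ) = 1 from rfl,
      uIcc_of_le (show (0:ℝ) ≤ 1 from zero_le_one)] at hq
    change IccExtend zero_le_one _ q = _
    rw [IccExtend_of_mem _ _ hq, hNr (w z) (hzw.trans_le (min_le_right _ _)), ← hsc ⟨q, hq⟩]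
    simp [mul_comm]
  refine ⟨S, hS, hS0, ?_, ?_⟩
  · rw [Metric.eventually_nhds_iff_ball]
    refine ⟨min η ρ, lt_min hη hρ, fun e he => ?_⟩
    have := key (0, e) (by
      rw [Prod.norm_def]; simpa using he)
    simpa using this
  · rw [Metric.eventually_nhds_iff_ball]
    refine ⟨min η ρ, lt_min hη hρ, fun z hz => ?_⟩
    rw [mem_ball_zero_iff] at hz
    have hzn : ∀ t : ℝ, |t| < min η ρ → ‖(t, z.2)‖ < min η ρ := by
      intro t ht
      rw [Prod.norm_def]
      exact max_lt ht ((norm_snd_le z).trans_lt hz)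
    have hcont : ContinuousOn (fun t => f (S (t, z.2))) (Ioo (-(min η ρ)) (min η ρ)) := by
      intro t ht
      obtain ⟨-, -, h3, h4⟩ := hball (t, z.2) (by
        rw [mem_ball_zero_iff]
        exact (hzn t (abs_lt.2 ht)).trans_le (min_le_left _ _))
      have h5 : AnalyticAt ℝ f (S (t, z.2)) := h4
      have h6 : ContinuousAt (fun t : ℝ => S (t, z.2)) t :=
        ContinuousAt.comp (g := S) (f := fun t : ℝ => (t, z.2)) h3.continuousAt (by fun_prop)
      exact (ContinuousAt.comp (g := f) (f := fun t : ℝ => S (t, z.2)) h5.continuousAt h6).continuousWithinAt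
    have hz1 : z.1 ∈ Ioo (-(min η ρ)) (min η ρ) := abs_lt.1 ((norm_fst_le z).trans_lt hz)
    have h0 : (0:ℝ) ∈ Ioo (-(min η ρ)) (min η ρ) := by
      have := lt_min hη hρ
      exact ⟨by linarith, this⟩
    have hD : HasDerivAt (fun t => ∫ q in (0:ℝ)..t, f (S (q, z.2))) (f (S (z.1, z.2))) z.1 := by
      apply intervalIntegral.integral_hasDerivAt_right
      · apply ContinuousOn.intervalIntegrable
        exact hcont.mono ((ordConnected_Ioo).uIcc_subset h0 hz1)
      · exact hcont.stronglyMeasurableAtFilter isOpen_Ioo _ hz1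
      · exact hcont.continuousAt (isOpen_Ioo.mem_nhds hz1)
    have hD2 := hD.const_add z.2
    refine hD2.congr_of_eventuallyEq ?_
    filter_upwards [isOpen_Ioo.mem_nhds hz1] with t ht
    exact key (t, z.2) (hzn t (abs_lt.2 ht))

/-- Analytic flow of an analytic vector field. -/
theorem ode1 [CompleteSpace E] {f : E → E} {e0 : E} (hf : AnalyticAt ℝ f e0) :
    ∃ S : ℝ × E → E, AnalyticAt ℝ S (0, e0) ∧ (∀ᶠ e in 𝓝 e0, S (0, e) = e) ∧
      ∀ᶠ z in 𝓝 ((0 : ℝ), e0), HasDerivAt (fun t => S (t, z.2)) (f (S z)) z.1 := by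
  have hf0 : AnalyticAt ℝ (fun e => f (e0 + e)) 0 :=
    AnalyticAt.comp (g := f) (f := fun e => e0 + e) (by simpa using hf) (by fun_prop)
  obtain ⟨S, hS, hS0, h1, h2⟩ := ode0 hf0
  have ht : Tendsto (fun e => e - e0) (𝓝 e0) (𝓝 0) := by
    have : ContinuousAt (fun e => e - e0) e0 := by fun_prop
    simpa [ContinuousAt] using this
  have ht2 : Tendsto (fun z : ℝ × E => (z.1, z.2 - e0)) (𝓝 (0, e0)) (𝓝 0) := by
    have : ContinuousAt (fun z : ℝ × E => (z.1, z.2 - e0)) (0, e0) := by fun_prop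
    rw [ContinuousAt] at this
    simp only [sub_self] at this
    exact this
  refine ⟨fun z => e0 + S (z.1, z.2 - e0), ?_, ?_, ?_⟩
  · refine analyticAt_const.add ?_
    refine AnalyticAt.comp (g := S) (f := fun z : ℝ × E => (z.1, z.2 - e0)) ?_ (by fun_prop)
    simp only [sub_self]
    exact hS
  · filter_upwards [ht.eventually h1] with e he
    simp [he]
  · filter_upwards [ht2.eventually h2] with z hz
    exact hz.const_add e0

end ODE2
end NF

namespace NF

/-! ### Partial derivatives -/

noncomputable def dx (k : ℝ × ℝ → ℝ) (p : ℝ × ℝ) : ℝ := fderiv ℝ k p (1, 0)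
noncomputable def dy (k : ℝ × ℝ → ℝ) (p : ℝ × ℝ) : ℝ := fderiv ℝ k p (0, 1)

noncomputable def ex (c : ℝ × ℝ × ℝ → ℝ) (z : ℝ × ℝ × ℝ) : ℝ := fderiv ℝ c z (1, 0, 0)
noncomputable def ey (c : ℝ × ℝ × ℝ → ℝ) (z : ℝ × ℝ × ℝ) : ℝ := fderiv ℝ c z (0, 1, 0)
noncomputable def ep (c : ℝ × ℝ × ℝ → ℝ) (z : ℝ × ℝ × ℝ) : ℝ := fderiv ℝ c z (0, 0, 1)

lemma an_fderiv_apply {E : Type*} [NormedAddCommGroup E] [NormedSpace ℝ E]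
    {k : E → ℝ} {p : E} (hk : AnalyticAt ℝ k p) (v : E) :
    AnalyticAt ℝ (fun q => fderiv ℝ k q v) p :=
  AnalyticAt.comp (g := ContinuousLinearMap.apply ℝ ℝ v)
    (ContinuousLinearMap.analyticAt _ _) hk.fderiv

@[fun_prop]
lemma an_dx {k : ℝ × ℝ → ℝ} {p : ℝ × ℝ} (hk : AnalyticAt ℝ k p) : AnalyticAt ℝ (dx k) p :=
  an_fderiv_apply hk _
@[fun_prop]
lemma an_dy {k : ℝ × ℝ → ℝ} {p : ℝ × ℝ} (hk : AnalyticAt ℝ k p) : AnalyticAt ℝ (dy k) p :=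
  an_fderiv_apply hk _
@[fun_prop]
lemma an_ex {c : ℝ × ℝ × ℝ → ℝ} {p : ℝ × ℝ × ℝ} (hk : AnalyticAt ℝ c p) : AnalyticAt ℝ (ex c) p :=
  an_fderiv_apply hk _
@[fun_prop]
lemma an_ey {c : ℝ × ℝ × ℝ → ℝ} {p : ℝ × ℝ × ℝ} (hk : AnalyticAt ℝ c p) : AnalyticAt ℝ (ey c) p :=
  an_fderiv_apply hk _
@[fun_prop]
lemma an_ep {c : ℝ × ℝ × ℝ → ℝ} {p : ℝ × ℝ × ℝ} (hk : AnalyticAt ℝ c p) : AnalyticAt ℝ (ep c) p :=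
  an_fderiv_apply hk _

/-- chain rule in two variables -/
lemma chain2 {k : ℝ × ℝ → ℝ} {X Y : ℝ → ℝ} {X' Y' t : ℝ}
    (hk : DifferentiableAt ℝ k (X t, Y t)) (hX : HasDerivAt X X' t) (hY : HasDerivAt Y Y' t) :
    HasDerivAt (fun s => k (X s, Y s)) (dx k (X t, Y t) * X' + dy k (X t, Y t) * Y') t := by
  have h := HasFDerivAt.comp_hasDerivAt t (f := fun s => (X s, Y s)) hk.hasFDerivAt (hX.prodMk hY)
  convert! h using 1
  have : ((X', Y') : ℝ × ℝ) = X' • ((1 : ℝ), (0 : ℝ)) + Y' • ((0 : ℝ), (1 : ℝ)) := by simp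
  rw [this, map_add, map_smul, map_smul, smul_eq_mul, smul_eq_mul, dx, dy]
  ring

lemma chain3 {c : ℝ × ℝ × ℝ → ℝ} {X Y P : ℝ → ℝ} {X' Y' P' t : ℝ}
    (hk : DifferentiableAt ℝ c (X t, Y t, P t)) (hX : HasDerivAt X X' t)
    (hY : HasDerivAt Y Y' t) (hP : HasDerivAt P P' t) :
    HasDerivAt (fun s => c (X s, Y s, P s)) (ex c (X t, Y t, P t) * X' + ey c (X t, Y t, P t) * Y'
      + ep c (X t, Y t, P t) * P') t := by
  have h := HasFDerivAt.comp_hasDerivAt t (f := fun s => (X s, Y s, P s)) hk.hasFDerivAt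
    (hX.prodMk (hY.prodMk hP))
  convert! h using 1
  have : ((X', Y', P') : ℝ × ℝ × ℝ) = X' • ((1 : ℝ), (0 : ℝ), (0 : ℝ))
    + Y' • ((0 : ℝ), (1 : ℝ), (0 : ℝ)) + P' • ((0 : ℝ), (0 : ℝ), (1 : ℝ)) := by simp
  rw [this, map_add, map_add, map_smul, map_smul, map_smul, smul_eq_mul, smul_eq_mul, smul_eq_mul,
    ex, ey, ep]
  ring

lemma hasDeriv_x {k : ℝ × ℝ → ℝ} {x y : ℝ} (hk : AnalyticAt ℝ k (x, y)) :
    HasDerivAt (fun t => k (t, y)) (dx k (x, y)) x := by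
  have := chain2 (k := k) (X := fun t => t) (Y := fun _ => y) hk.differentiableAt (hasDerivAt_id' x)
    (hasDerivAt_const x y)
  simpa using this

lemma hasDeriv_y {k : ℝ × ℝ → ℝ} {x y : ℝ} (hk : AnalyticAt ℝ k (x, y)) :
    HasDerivAt (fun t => k (x, t)) (dy k (x, y)) y := by
  have := chain2 (k := k) (X := fun _ => x) (Y := fun t => t) hk.differentiableAt
    (hasDerivAt_const y x) (hasDerivAt_id' y)
  simpa using this

lemma dx_eq {k : ℝ × ℝ → ℝ} {x y a : ℝ} (hk : AnalyticAt ℝ k (x, y))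
    (h : HasDerivAt (fun t => k (t, y)) a x) : dx k (x, y) = a :=
  (hasDeriv_x hk).unique h

lemma dy_eq {k : ℝ × ℝ → ℝ} {x y a : ℝ} (hk : AnalyticAt ℝ k (x, y))
    (h : HasDerivAt (fun t => k (x, t)) a y) : dy k (x, y) = a :=
  (hasDeriv_y hk).unique h

lemma dx_congr {k l : ℝ × ℝ → ℝ} {p : ℝ × ℝ} (h : k =ᶠ[𝓝 p] l) : dx k =ᶠ[𝓝 p] dx l := by
  filter_upwards [h.fderiv (𝕜 := ℝ)] with q hq
  simp [dx, hq]

lemma dy_congr {k l : ℝ × ℝ → ℝ} {p : ℝ × ℝ} (h : k =ᶠ[𝓝 p] l) : dy k =ᶠ[𝓝 p] dy l := by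
  filter_upwards [h.fderiv (𝕜 := ℝ)] with q hq
  simp [dy, hq]

lemma dx_dy_comm {k : ℝ × ℝ → ℝ} {p : ℝ × ℝ} (hk : AnalyticAt ℝ k p) :
    dx (dy k) p = dy (dx k) p := by
  have hs : IsSymmSndFDerivAt ℝ k p :=
    ContDiffAt.isSymmSndFDerivAt_of_omega hk.contDiffAt
  have hd : DifferentiableAt ℝ (fderiv ℝ k) p := hk.fderiv.differentiableAt
  have h : ∀ v w : ℝ × ℝ, fderiv ℝ (fun q => fderiv ℝ k q v) p w = fderiv ℝ (fderiv ℝ k) p w v := by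
    intro v w
    rw [fderiv_clm_apply hd (differentiableAt_const v)]
    simp
  change fderiv ℝ (fun q => fderiv ℝ k q (0, 1)) p (1, 0)
    = fderiv ℝ (fun q => fderiv ℝ k q (1, 0)) p (0, 1)
  rw [h, h]
  exact hs _ _

/-! ### Second order jets of curves -/

def Jet2 (x : ℝ → ℝ) (t a b : ℝ) : Prop :=
  (∀ᶠ s in 𝓝 t, DifferentiableAt ℝ x s) ∧ deriv x t = a ∧ HasDerivAt (deriv x) b t

lemma Jet2.hasDerivAt {x : ℝ → ℝ} {t a b : ℝ} (h : Jet2 x t a b) : HasDerivAt x a t := by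
  have := h.1.self_of_nhds.hasDerivAt
  rwa [h.2.1] at this

lemma Jet2.unique {x : ℝ → ℝ} {t a b a' b' : ℝ} (h : Jet2 x t a b) (h' : Jet2 x t a' b') :
    a = a' ∧ b = b' :=
  ⟨h.2.1.symm.trans h'.2.1, h.2.2.unique h'.2.2⟩

lemma Jet2.of_eventually {x x1 : ℝ → ℝ} {t b : ℝ} (h : ∀ᶠ s in 𝓝 t, HasDerivAt x (x1 s) s)
    (h1 : HasDerivAt x1 b t) : Jet2 x t (x1 t) b := by
  refine ⟨h.mono fun s hs => hs.differentiableAt, h.self_of_nhds.deriv, ?_⟩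
  refine h1.congr_of_eventuallyEq ?_
  filter_upwards [h] with s hs
  exact hs.deriv

lemma Jet2.congr {x x' : ℝ → ℝ} {t a b : ℝ} (h : Jet2 x t a b) (he : x' =ᶠ[𝓝 t] x) :
    Jet2 x' t a b := by
  obtain ⟨h1, h2, h3⟩ := h
  refine ⟨?_, ?_, ?_⟩
  · filter_upwards [h1, he.eventuallyEq_nhds] with s hs hs'
    exact hs.congr_of_eventuallyEq hs'
  · rw [he.deriv_eq, h2]
  · exact h3.congr_of_eventuallyEq he.deriv

lemma Jet2.comp2 {k : ℝ × ℝ → ℝ} {X Y : ℝ → ℝ} {t X1 X2 Y1 Y2 : ℝ} (hX : Jet2 X t X1 X2)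
    (hY : Jet2 Y t Y1 Y2) (hk : AnalyticAt ℝ k (X t, Y t)) :
    Jet2 (fun s => k (X s, Y s)) t (dx k (X t, Y t) * X1 + dy k (X t, Y t) * Y1)
      (dx k (X t, Y t) * X2 + dy k (X t, Y t) * Y2 + dx (dx k) (X t, Y t) * X1 ^ 2
        + (dx (dy k) (X t, Y t) + dy (dx k) (X t, Y t)) * X1 * Y1
        + dy (dy k) (X t, Y t) * Y1 ^ 2) := by
  have hc : ContinuousAt (fun s => (X s, Y s)) t :=
    hX.hasDerivAt.continuousAt.prodMk hY.hasDerivAt.continuousAt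
  have h1 : ∀ᶠ s in 𝓝 t, HasDerivAt (fun s => k (X s, Y s))
      (dx k (X s, Y s) * deriv X s + dy k (X s, Y s) * deriv Y s) s := by
    have := hc.eventually hk.eventually_analyticAt
    filter_upwards [this, hX.1, hY.1] with s hs hXs hYs
    exact chain2 hs.differentiableAt hXs.hasDerivAt hYs.hasDerivAt
  have h2 := Jet2.of_eventually h1 (((chain2 (an_dx hk).differentiableAt hX.hasDerivAt
    hY.hasDerivAt).mul hX.2.2).add ((chain2 (an_dy hk).differentiableAt hX.hasDerivAt
    hY.hasDerivAt).mul hY.2.2))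
  rw [hX.2.1, hY.2.1] at h2
  convert! h2 using 1
  ring

/-! ### Transformation of the right hand side -/

noncomputable def Jac (f k : ℝ × ℝ → ℝ) (q : ℝ × ℝ) : ℝ := dx f q * dy k q - dy f q * dx k q

noncomputable def T (B : ℝ × ℝ × ℝ → ℝ) (f k : ℝ × ℝ → ℝ) (z : ℝ × ℝ × ℝ) : ℝ :=
  ((dx f (z.1, z.2.1) + dy f (z.1, z.2.1) * z.2.2) ^ 3
      * B (f (z.1, z.2.1), k (z.1, z.2.1), (dx k (z.1, z.2.1) + dy k (z.1, z.2.1) * z.2.2)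
          / (dx f (z.1, z.2.1) + dy f (z.1, z.2.1) * z.2.2))
    - (dx (dx k) (z.1, z.2.1) + (dx (dy k) (z.1, z.2.1) + dy (dx k) (z.1, z.2.1)) * z.2.2
        + dy (dy k) (z.1, z.2.1) * z.2.2 ^ 2) * (dx f (z.1, z.2.1) + dy f (z.1, z.2.1) * z.2.2)
    + (dx k (z.1, z.2.1) + dy k (z.1, z.2.1) * z.2.2)
      * (dx (dx f) (z.1, z.2.1) + (dx (dy f) (z.1, z.2.1) + dy (dx f) (z.1, z.2.1)) * z.2.2
        + dy (dy f) (z.1, z.2.1) * z.2.2 ^ 2)) / Jac f k (z.1, z.2.1)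

lemma algT {a b m n fxx fm fyy kxx km kyy P X1 X2 Y2 Bv J : ℝ} (hX1 : X1 ≠ 0)
    (hJd : J = a * n - b * m) (hJ : J ≠ 0) :
    ((a * X1 + b * (P * X1)) * (m * X2 + n * Y2 + kxx * X1 ^ 2 + km * X1 * (P * X1)
        + kyy * (P * X1) ^ 2)
      - (m * X1 + n * (P * X1)) * (a * X2 + b * Y2 + fxx * X1 ^ 2 + fm * X1 * (P * X1)
        + fyy * (P * X1) ^ 2) = (a * X1 + b * (P * X1)) ^ 3 * Bv)
    ↔ (X1 * Y2 - (P * X1) * X2 = X1 ^ 3 * (((a + b * P) ^ 3 * Bv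
        - (kxx + km * P + kyy * P ^ 2) * (a + b * P)
        + (m + n * P) * (fxx + fm * P + fyy * P ^ 2)) / J)) := by
  rw [← mul_div_assoc, eq_div_iff hJ, hJd]
  constructor
  · intro h; linear_combination h
  · intro h; linear_combination h

/-- Jets along a curve are solution jets of `B` after applying `(f,k)` iff they are solution jets
of `T B f k` before. -/
lemma jetT {B : ℝ × ℝ × ℝ → ℝ} {f k : ℝ × ℝ → ℝ} {X Y : ℝ → ℝ} {t X1 X2 Y1 Y2 x1 x2 y1 y2 : ℝ}
    (hX : Jet2 X t X1 X2) (hY : Jet2 Y t Y1 Y2) (hX1 : X1 ≠ 0)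
    (hf : AnalyticAt ℝ f (X t, Y t)) (hk : AnalyticAt ℝ k (X t, Y t))
    (hJ : Jac f k (X t, Y t) ≠ 0)
    (hx : Jet2 (fun s => f (X s, Y s)) t x1 x2) (hy : Jet2 (fun s => k (X s, Y s)) t y1 y2) :
    x1 * y2 - y1 * x2 = x1 ^ 3 * B (f (X t, Y t), k (X t, Y t), y1 / x1) ↔
    X1 * Y2 - Y1 * X2 = X1 ^ 3 * T B f k (X t, Y t, Y1 / X1) := by
  obtain ⟨rfl, rfl⟩ := hx.unique (hX.comp2 hY hf)
  obtain ⟨rfl, rfl⟩ := hy.unique (hX.comp2 hY hk)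
  have hP : ∃ P, Y1 = P * X1 := ⟨Y1 / X1, by field_simp⟩
  obtain ⟨P, rfl⟩ := hP
  have h := algT (a := dx f (X t, Y t)) (b := dy f (X t, Y t)) (m := dx k (X t, Y t))
    (n := dy k (X t, Y t)) (fxx := dx (dx f) (X t, Y t))
    (fm := dx (dy f) (X t, Y t) + dy (dx f) (X t, Y t)) (fyy := dy (dy f) (X t, Y t))
    (kxx := dx (dx k) (X t, Y t)) (km := dx (dy k) (X t, Y t) + dy (dx k) (X t, Y t))
    (kyy := dy (dy k) (X t, Y t)) (P := P) (X2 := X2) (Y2 := Y2)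
    (Bv := B (f (X t, Y t), k (X t, Y t), (dx k (X t, Y t) + dy k (X t, Y t) * P)
          / (dx f (X t, Y t) + dy f (X t, Y t) * P))) hX1 rfl hJ
  rw [mul_div_cancel_right₀ P hX1]
  have e1 : (dx k (X t, Y t) * X1 + dy k (X t, Y t) * (P * X1))
      / (dx f (X t, Y t) * X1 + dy f (X t, Y t) * (P * X1))
      = (dx k (X t, Y t) + dy k (X t, Y t) * P) / (dx f (X t, Y t) + dy f (X t, Y t) * P) := by
    rw [show dx k (X t, Y t) * X1 + dy k (X t, Y t) * (P * X1)
      = (dx k (X t, Y t) + dy k (X t, Y t) * P) * X1 by ring,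
      show dx f (X t, Y t) * X1 + dy f (X t, Y t) * (P * X1)
      = (dx f (X t, Y t) + dy f (X t, Y t) * P) * X1 by ring, mul_div_mul_right _ _ hX1]
  rw [e1]
  exact h

/-- admissible point transformations (given by the inverse map) -/
structure Good (f k : ℝ × ℝ → ℝ) : Prop where
  anf : AnalyticAt ℝ f 0
  ank : AnalyticAt ℝ k 0
  f0 : f 0 = 0
  k0 : k 0 = 0
  fx : dx f 0 ≠ 0
  kx : dx k 0 = 0
  ky : dy k 0 ≠ 0

lemma Good.jac {f k : ℝ × ℝ → ℝ} (h : Good f k) : Jac f k 0 ≠ 0 := by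
  simp [Jac, h.kx, h.fx, h.ky]

lemma Good.comp {f k f' k' : ℝ × ℝ → ℝ} (h : Good f k) (h' : Good f' k') :
    Good (fun q => f (f' q, k' q)) (fun q => k (f' q, k' q)) := by
  have e0 : (f' 0, k' 0) = (0 : ℝ × ℝ) := by rw [h'.f0, h'.k0]; rfl
  have hp : AnalyticAt ℝ (fun q => (f' q, k' q)) 0 := h'.anf.prod h'.ank
  have a1 : AnalyticAt ℝ (fun q => f (f' q, k' q)) 0 :=
    AnalyticAt.comp (g := f) (by rw [e0]; exact h.anf) hp
  have a2 : AnalyticAt ℝ (fun q => k (f' q, k' q)) 0 :=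
    AnalyticAt.comp (g := k) (by rw [e0]; exact h.ank) hp
  have X : ∀ g : ℝ × ℝ → ℝ, AnalyticAt ℝ g 0 → AnalyticAt ℝ (fun q => g (f' q, k' q)) 0 →
      dx (fun q => g (f' q, k' q)) 0 = dx g 0 * dx f' 0 + dy g 0 * dx k' 0 := by
    intro g hg hg'
    have := chain2 (k := g) (X := fun t => f' (t, 0)) (Y := fun t => k' (t, 0)) (t := 0)
      (by change DifferentiableAt ℝ g (f' 0, k' 0); rw [e0]; exact hg.differentiableAt)
      (hasDeriv_x h'.anf) (hasDeriv_x h'.ank)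
    have h2 := dx_eq (x := 0) (y := 0) hg' this
    change dx (fun q => g (f' q, k' q)) 0 = dx g (f' 0, k' 0) * dx f' 0
      + dy g (f' 0, k' 0) * dx k' 0 at h2
    rwa [e0] at h2
  have Y : ∀ g : ℝ × ℝ → ℝ, AnalyticAt ℝ g 0 → AnalyticAt ℝ (fun q => g (f' q, k' q)) 0 →
      dy (fun q => g (f' q, k' q)) 0 = dx g 0 * dy f' 0 + dy g 0 * dy k' 0 := by
    intro g hg hg'
    have := chain2 (k := g) (X := fun t => f' (0, t)) (Y := fun t => k' (0, t)) (t := 0)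
      (by change DifferentiableAt ℝ g (f' 0, k' 0); rw [e0]; exact hg.differentiableAt)
      (hasDeriv_y h'.anf) (hasDeriv_y h'.ank)
    have h2 := dy_eq (x := 0) (y := 0) hg' this
    change dy (fun q => g (f' q, k' q)) 0 = dx g (f' 0, k' 0) * dy f' 0
      + dy g (f' 0, k' 0) * dy k' 0 at h2
    rwa [e0] at h2
  refine ⟨a1, a2, ?_, ?_, ?_, ?_, ?_⟩
  · simp only [e0]; exact h.f0
  · simp only [e0]; exact h.k0
  · rw [X f h.anf a1, h'.kx]
    simp [h.fx, h'.fx]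
  · rw [X k h.ank a2, h'.kx, h.kx]; simp
  · rw [Y k h.ank a2, h.kx]
    simp [h.ky, h'.ky]

lemma an_pr {z : ℝ × ℝ × ℝ} {k : ℝ × ℝ → ℝ} (hk : AnalyticAt ℝ k (z.1, z.2.1)) :
    AnalyticAt ℝ (fun z : ℝ × ℝ × ℝ => k (z.1, z.2.1)) z :=
  AnalyticAt.comp (g := k) (f := fun z : ℝ × ℝ × ℝ => (z.1, z.2.1)) hk (by fun_prop)

lemma an_T {B : ℝ × ℝ × ℝ → ℝ} {f k : ℝ × ℝ → ℝ} (h : Good f k) (hB : AnalyticAt ℝ B 0) :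
    AnalyticAt ℝ (T B f k) 0 := by
  have hD : dx f (0, 0) + dy f (0, 0) * 0 ≠ 0 := by
    have h0 : dx f (0, 0) ≠ 0 := h.fx
    simpa using h0
  have hJ : Jac f k (0, 0) ≠ 0 := h.jac
  have a1 := an_pr (z := 0) (an_dx h.anf)
  have a2 := an_pr (z := 0) (an_dy h.anf)
  have a3 := an_pr (z := 0) (an_dx h.ank)
  have a4 := an_pr (z := 0) (an_dy h.ank)
  have a5 := an_pr (z := 0) (an_dx (an_dx h.anf))
  have a6 := an_pr (z := 0) (an_dx (an_dy h.anf))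
  have a7 := an_pr (z := 0) (an_dy (an_dx h.anf))
  have a8 := an_pr (z := 0) (an_dy (an_dy h.anf))
  have b5 := an_pr (z := 0) (an_dx (an_dx h.ank))
  have b6 := an_pr (z := 0) (an_dx (an_dy h.ank))
  have b7 := an_pr (z := 0) (an_dy (an_dx h.ank))
  have b8 := an_pr (z := 0) (an_dy (an_dy h.ank))
  have c1 := an_pr (z := 0) h.anf
  have c2 := an_pr (z := 0) h.ank
  have P : AnalyticAt ℝ (fun z : ℝ × ℝ × ℝ => z.2.2) 0 := by fun_prop
  have hDa := a1.add (a2.mul P)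
  have hNa := a3.add (a4.mul P)
  have hBa : AnalyticAt ℝ (fun z : ℝ × ℝ × ℝ => B (f (z.1, z.2.1), k (z.1, z.2.1),
      (dx k (z.1, z.2.1) + dy k (z.1, z.2.1) * z.2.2)
          / (dx f (z.1, z.2.1) + dy f (z.1, z.2.1) * z.2.2))) 0 := by
    refine AnalyticAt.comp (g := B) ?_ (c1.prod (c2.prod (hNa.div hDa hD)))
    have e1 : f (0, 0) = 0 := h.f0
    have e2 : k (0, 0) = 0 := h.k0
    have e3 : dx k (0, 0) = 0 := h.kx
    simp [e1, e2, e3]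
    exact hB
  refine AnalyticAt.div ?_ ((a1.mul a4).sub (a2.mul a3)) hJ
  exact (((hDa.pow 3).mul hBa).sub (((b5.add ((b6.add b7).mul P)).add (b8.mul (P.pow 2))).mul
    hDa)).add (hNa.mul ((a5.add ((a6.add a7).mul P)).add (a8.mul (P.pow 2))))

/-- The second equation is obtained from `B` by an admissible point transformation. -/
def Rel (B B' : ℝ × ℝ × ℝ → ℝ) : Prop :=
  ∃ f k, Good f k ∧ ∀ᶠ z in 𝓝 (0 : ℝ × ℝ × ℝ), B' z = T B f k z

lemma tendsto_pr : Tendsto (fun z : ℝ × ℝ × ℝ => (z.1, z.2.1)) (𝓝 0) (𝓝 0) := by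
  have : ContinuousAt (fun z : ℝ × ℝ × ℝ => (z.1, z.2.1)) 0 := by fun_prop
  exact this

lemma jet_poly (X a b : ℝ) : Jet2 (fun t => X + a * t + b / 2 * t ^ 2) 0 a b := by
  have h := Jet2.of_eventually (x := fun t => X + a * t + b / 2 * t ^ 2) (x1 := fun t => a + b * t)
    (t := 0) (b := b) (Eventually.of_forall fun s => by
      have := (((hasDerivAt_id' s).const_mul a).const_add X).add
        (((hasDerivAt_id' s).pow 2).const_mul (b / 2))
      convert! this using 1
      simp; ring) (by
      have := ((hasDerivAt_id' (0:ℝ)).const_mul b).const_add a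
      simpa using this)
  simpa using h

lemma hJc {f k : ℝ × ℝ → ℝ} (h : Good f k) : ∀ᶠ q in 𝓝 (0 : ℝ × ℝ), Jac f k q ≠ 0 := by
  have : AnalyticAt ℝ (Jac f k) 0 := ((an_dx h.anf).mul (an_dy h.ank)).sub
    ((an_dy h.anf).mul (an_dx h.ank))
  exact this.continuousAt.eventually_ne h.jac

lemma Rel.trans {B B' B'' : ℝ × ℝ × ℝ → ℝ} (h : Rel B B') (h' : Rel B' B'') : Rel B B'' := by
  obtain ⟨f, k, hg, hB'⟩ := h
  obtain ⟨f', k', hg', hB''⟩ := h'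
  have hgc := hg.comp hg'
  refine ⟨_, _, hgc, ?_⟩
  have e0 : (f' 0, k' 0) = (0 : ℝ × ℝ) := by rw [hg'.f0, hg'.k0]; rfl
  have hp : Tendsto (fun q => (f' q, k' q)) (𝓝 0) (𝓝 0) := by
    have := (hg'.anf.continuousAt.prodMk hg'.ank.continuousAt)
    rwa [ContinuousAt, e0] at this
  -- the transformed 1-jet tends to zero
  have hDc : ContinuousAt (fun z : ℝ × ℝ × ℝ => dx f' (z.1, z.2.1) + dy f' (z.1, z.2.1) * z.2.2) 0 :=
    ((an_pr (z := 0) (an_dx hg'.anf)).add ((an_pr (z := 0) (an_dy hg'.anf)).mul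
      (by fun_prop))).continuousAt
  have hNc : ContinuousAt (fun z : ℝ × ℝ × ℝ => dx k' (z.1, z.2.1) + dy k' (z.1, z.2.1) * z.2.2) 0 :=
    ((an_pr (z := 0) (an_dx hg'.ank)).add ((an_pr (z := 0) (an_dy hg'.ank)).mul
      (by fun_prop))).continuousAt
  have hD0 : dx f' ((0 : ℝ × ℝ × ℝ).1, (0 : ℝ × ℝ × ℝ).2.1)
      + dy f' ((0 : ℝ × ℝ × ℝ).1, (0 : ℝ × ℝ × ℝ).2.1) * (0 : ℝ × ℝ × ℝ).2.2 ≠ 0 := by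
    have : dx f' (0, 0) ≠ 0 := hg'.fx
    simpa using this
  have hjet : Tendsto (fun z : ℝ × ℝ × ℝ => (f' (z.1, z.2.1), k' (z.1, z.2.1),
      (dx k' (z.1, z.2.1) + dy k' (z.1, z.2.1) * z.2.2)
          / (dx f' (z.1, z.2.1) + dy f' (z.1, z.2.1) * z.2.2))) (𝓝 0) (𝓝 0) := by
    have := (an_pr (z := 0) hg'.anf).continuousAt.prodMk
      ((an_pr (z := 0) hg'.ank).continuousAt.prodMk (hNc.div hDc hD0))
    rw [ContinuousAt] at this
    have e1 : f' (0, 0) = 0 := hg'.f0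
    have e2 : k' (0, 0) = 0 := hg'.k0
    have e3 : dx k' (0, 0) = 0 := hg'.kx
    simp only [Prod.fst_zero, Prod.snd_zero, mul_zero, add_zero, e1, e2, e3, zero_div,
      Pi.div_apply] at this
    exact this
  filter_upwards [hB'', tendsto_pr.eventually hg'.anf.eventually_analyticAt,
    tendsto_pr.eventually hg'.ank.eventually_analyticAt,
    tendsto_pr.eventually (hp.eventually hg.anf.eventually_analyticAt),
    tendsto_pr.eventually (hp.eventually hg.ank.eventually_analyticAt),
    tendsto_pr.eventually hgc.anf.eventually_analyticAt,
    tendsto_pr.eventually hgc.ank.eventually_analyticAt,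
    tendsto_pr.eventually (hJc hg'), tendsto_pr.eventually (hp.eventually (hJc hg)),
    tendsto_pr.eventually (hJc hgc), hjet.eventually hB', hDc.eventually_ne hD0]
    with z h1 h2 h3 h4 h5 h6 h7 h8 h9 h10 h11 h12
  obtain ⟨X, Y, P⟩ := z
  simp only at h1 h2 h3 h4 h5 h6 h7 h8 h9 h10 h11 h12
  have jX := jet_poly X 1 0
  have jY := jet_poly Y P (B'' (X, Y, P))
  set x : ℝ → ℝ := fun t => X + 1 * t + 0 / 2 * t ^ 2 with hx
  set y : ℝ → ℝ := fun t => Y + P * t + B'' (X, Y, P) / 2 * t ^ 2 with hy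
  have x0 : x 0 = X := by simp [hx]
  have y0 : y 0 = Y := by simp [hy]
  rw [← x0, ← y0] at h2 h3 h4 h5 h6 h7 h8 h9 h10
  have jf' := jX.comp2 jY h2
  have jk' := jX.comp2 jY h3
  have s1 := (jetT (B := B') jX jY one_ne_zero h2 h3 h8 jf' jk').2 (by
    rw [x0, y0]
    simp only [one_mul, mul_zero, sub_zero, one_pow, div_one]
    exact h1)
  have hne : dx f' (x 0, y 0) * 1 + dy f' (x 0, y 0) * P ≠ 0 := by
    rw [x0, y0, mul_one]; exact h12
  have jf := jf'.comp2 jk' h4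
  have jk := jf'.comp2 jk' h5
  have s2 := (jetT (B := B) jf' jk' hne h4 h5 h9 jf jk).2 (by
    rw [s1]
    congr 1
    rw [x0, y0, mul_one, mul_one]
    exact h11)
  have s3 := (jetT (B := B) (f := fun q => f (f' q, k' q)) (k := fun q => k (f' q, k' q))
    jX jY one_ne_zero h6 h7 h10 jf jk).1 s2
  rw [x0, y0] at s3
  simp only [one_mul, mul_zero, sub_zero, one_pow, div_one] at s3
  exact s3

end NF

namespace NF

/-! ### Taylor coefficients in the third variable -/

noncomputable def c2 (B : ℝ × ℝ × ℝ → ℝ) (z : ℝ × ℝ × ℝ) : ℝ := ep (ep B) z / 2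
noncomputable def c3 (B : ℝ × ℝ × ℝ → ℝ) (z : ℝ × ℝ × ℝ) : ℝ := ep (ep (ep B)) z / 6

@[fun_prop]
lemma an_c2 {c : ℝ × ℝ × ℝ → ℝ} {p : ℝ × ℝ × ℝ} (hk : AnalyticAt ℝ c p) : AnalyticAt ℝ (c2 c) p :=
  (an_ep (an_ep hk)).div analyticAt_const (by norm_num)
@[fun_prop]
lemma an_c3 {c : ℝ × ℝ × ℝ → ℝ} {p : ℝ × ℝ × ℝ} (hk : AnalyticAt ℝ c p) : AnalyticAt ℝ (c3 c) p :=
  (an_ep (an_ep (an_ep hk))).div analyticAt_const (by norm_num)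

lemma an_slice {B : ℝ × ℝ × ℝ → ℝ} {x y p : ℝ} (hB : AnalyticAt ℝ B (x, y, p)) :
    AnalyticAt ℝ (fun q => B (x, y, q)) p :=
  AnalyticAt.comp (g := B) (f := fun q : ℝ => (x, y, q)) hB (by fun_prop)

lemma ev_slice {B : ℝ × ℝ × ℝ → ℝ} {x y p : ℝ} (hB : AnalyticAt ℝ B (x, y, p)) :
    ∀ᶠ q in 𝓝 p, AnalyticAt ℝ B (x, y, q) := by
  have h : ContinuousAt (fun q : ℝ => (x, y, q)) p := by fun_prop
  exact h.eventually hB.eventually_analyticAt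

lemma hasDeriv_p {B : ℝ × ℝ × ℝ → ℝ} {x y p : ℝ} (hB : AnalyticAt ℝ B (x, y, p)) :
    HasDerivAt (fun q => B (x, y, q)) (ep B (x, y, p)) p := by
  have := chain3 (c := B) (X := fun _ => x) (Y := fun _ => y) (P := fun t => t)
    hB.differentiableAt (hasDerivAt_const p x) (hasDerivAt_const p y) (hasDerivAt_id' p)
  simpa using this

lemma deriv_slice {B : ℝ × ℝ × ℝ → ℝ} {x y p : ℝ} (hB : AnalyticAt ℝ B (x, y, p)) :
    deriv (fun q => B (x, y, q)) =ᶠ[𝓝 p] fun q => ep B (x, y, q) := by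
  filter_upwards [ev_slice hB] with q hq
  exact (hasDeriv_p hq).deriv

lemma iter2 {B : ℝ × ℝ × ℝ → ℝ} {x y p : ℝ} (hB : AnalyticAt ℝ B (x, y, p)) :
    iteratedDeriv 2 (fun q => B (x, y, q)) p = 2 * c2 B (x, y, p) := by
  rw [iteratedDeriv_succ', iteratedDeriv_one, (deriv_slice hB).deriv_eq,
    (deriv_slice (an_ep hB)).self_of_nhds, c2]
  ring

lemma iter3 {B : ℝ × ℝ × ℝ → ℝ} {x y p : ℝ} (hB : AnalyticAt ℝ B (x, y, p)) :
    iteratedDeriv 3 (fun q => B (x, y, q)) p = 6 * c3 B (x, y, p) := by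
  rw [iteratedDeriv_succ', iteratedDeriv_succ', iteratedDeriv_one, (deriv_slice hB).deriv.deriv_eq,
    (deriv_slice (an_ep hB)).deriv_eq, (deriv_slice (an_ep (an_ep hB))).self_of_nhds, c3]
  ring

lemma expand {B : ℝ × ℝ × ℝ → ℝ} {x y p : ℝ} (hB : AnalyticAt ℝ B (x, y, p)) :
    (fun q => B (x, y, p + q) - (B (x, y, p) + ep B (x, y, p) * q + c2 B (x, y, p) * q ^ 2
      + c3 B (x, y, p) * q ^ 3)) =O[𝓝 0] fun q : ℝ => q ^ 4 := by
  have h := (an_slice hB).hasFPowerSeriesAt.isBigO_sub_partialSum_pow 4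
  have h1 : iteratedDeriv 1 (fun q => B (x, y, q)) p = ep B (x, y, p) := by
    rw [iteratedDeriv_one]; exact (deriv_slice hB).self_of_nhds
  have h' : (fun y : ℝ => ‖y‖ ^ 4) = fun y : ℝ => y ^ 4 := by
    funext y
    rw [← norm_pow, Real.norm_of_nonneg (by positivity)]
  rw [h'] at h
  refine h.congr_left fun q => ?_
  simp [FormalMultilinearSeries.partialSum, Finset.sum_range_succ, h1, iter2 hB, iter3 hB,
    Nat.factorial]
  ring

lemma uniq_step {a : ℝ} {g : ℝ → ℝ} {n : ℕ} (hg : ContinuousAt g 0)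
    (h : (fun q => a + q * g q) =O[𝓝[≠] 0] fun q : ℝ => q ^ (n + 1)) :
    a = 0 ∧ g =O[𝓝[≠] 0] fun q : ℝ => q ^ n := by
  have ha : a = 0 := by
    have t1 : Tendsto (fun q : ℝ => q ^ (n + 1)) (𝓝[≠] 0) (𝓝 0) := by
      have : ContinuousAt (fun q : ℝ => q ^ (n + 1)) 0 := by fun_prop
      have h2 := this.tendsto
      simp only [ne_eq, Nat.add_eq_zero_iff, one_ne_zero, and_false, not_false_eq_true, zero_pow]
        at h2
      exact h2.mono_left nhdsWithin_le_nhds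
    have t2 := h.trans_tendsto t1
    have t3 : Tendsto (fun q => a + q * g q) (𝓝[≠] 0) (𝓝 a) := by
      have : ContinuousAt (fun q => a + q * g q) 0 := by fun_prop
      have h2 := this.tendsto
      simp only [zero_mul, add_zero] at h2
      exact h2.mono_left nhdsWithin_le_nhds
    exact tendsto_nhds_unique t3 t2
  refine ⟨ha, ?_⟩
  subst ha
  have h3 := h.mul (Asymptotics.isBigO_refl (fun q : ℝ => q⁻¹) (𝓝[≠] 0))
  refine h3.congr' ?_ ?_
  · filter_upwards [self_mem_nhdsWithin] with q hq
    have : q ≠ 0 := hq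
    field_simp; ring
  · filter_upwards [self_mem_nhdsWithin] with q hq
    have : q ≠ 0 := hq
    field_simp; ring

lemma uniq4 {a b c d : ℝ}
    (h : (fun q => a + b * q + c * q ^ 2 + d * q ^ 3) =O[𝓝 0] fun q : ℝ => q ^ 4) :
    a = 0 ∧ b = 0 ∧ c = 0 ∧ d = 0 := by
  have h0 : (fun q => a + q * (b + q * (c + q * (d + q * 0))))
      =O[𝓝[≠] 0] fun q : ℝ => q ^ (3 + 1) := by
    refine (h.mono nhdsWithin_le_nhds).congr_left fun q => ?_
    ring
  obtain ⟨ha, h1⟩ := uniq_step (by fun_prop) h0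
  obtain ⟨hb, h2⟩ := uniq_step (n := 2) (by fun_prop) h1
  obtain ⟨hc, h3⟩ := uniq_step (n := 1) (by fun_prop) h2
  obtain ⟨hd, h4⟩ := uniq_step (n := 0) (by fun_prop) h3
  exact ⟨ha, hb, hc, hd⟩

lemma coefAlg {G H : ℝ → ℝ} {a b m n fxx fm fyy kxx km kyy b0 b1 b2 b3 t0 t1 t2 t3 J r : ℝ}
    (ha : a ≠ 0) (hJ : J = a * n - b * m) (hJ0 : J ≠ 0) (hr : r = J / a)
    (hG : (fun q => G (m / a + q) - (b0 + b1 * q + b2 * q ^ 2 + b3 * q ^ 3))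
      =O[𝓝 0] fun q : ℝ => q ^ 4)
    (hH : (fun P => H P - (t0 + t1 * P + t2 * P ^ 2 + t3 * P ^ 3)) =O[𝓝 0] fun P : ℝ => P ^ 4)
    (hHG : ∀ P, H P = ((a + b * P) ^ 3 * G ((m + n * P) / (a + b * P))
      - (kxx + km * P + kyy * P ^ 2) * (a + b * P)
      + (m + n * P) * (fxx + fm * P + fyy * P ^ 2)) / J) :
    J * t0 = a ^ 3 * b0 - kxx * a + m * fxx ∧
    J * t1 = 3 * a ^ 2 * b * b0 + a ^ 2 * r * b1 - kxx * b - km * a + n * fxx + m * fm ∧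
    J * t2 = 3 * a * b ^ 2 * b0 + 2 * a * b * r * b1 + a * r ^ 2 * b2 - km * b - kyy * a + n * fm
      + m * fyy ∧
    J * t3 = b ^ 3 * b0 + b ^ 2 * r * b1 + b * r ^ 2 * b2 + r ^ 3 * b3 - kyy * b + n * fyy := by
  have hD : ∀ᶠ P in 𝓝 (0:ℝ), a + b * P ≠ 0 := by
    have : ContinuousAt (fun P : ℝ => a + b * P) 0 := by fun_prop
    exact this.eventually_ne (by simpa using ha)
  have hq : Tendsto (fun P : ℝ => r * P / (a + b * P)) (𝓝 0) (𝓝 0) := by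
    have : ContinuousAt (fun P : ℝ => r * P / (a + b * P)) 0 :=
      ContinuousAt.div (by fun_prop) (by fun_prop) (by simpa using ha)
    simpa [ContinuousAt] using this
  have h1 := hG.comp_tendsto hq
  have h2 := (Asymptotics.isBigO_refl (fun P : ℝ => (a + b * P) ^ 3) (𝓝 0)).mul h1
  have h3 : (fun P : ℝ => (a + b * P) ^ 3 * (((fun q : ℝ => q ^ 4) ∘ fun P => r * P / (a + b * P)) P))
      =O[𝓝 0] fun P : ℝ => P ^ 4 := by
    have hb : (fun P : ℝ => r ^ 4 / (a + b * P)) =O[𝓝 0] fun _ : ℝ => (1:ℝ) := by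
      have : ContinuousAt (fun P : ℝ => r ^ 4 / (a + b * P)) 0 :=
        ContinuousAt.div (by fun_prop) (by fun_prop) (by simpa using ha)
      exact this.isBigO_one ℝ
    have h4 := hb.mul (Asymptotics.isBigO_refl (fun P : ℝ => P ^ 4) (𝓝 0))
    refine h4.congr' ?_ ?_
    · filter_upwards [hD] with P hP
      simp only [Function.comp]
      field_simp
    · filter_upwards with P
      ring
  have h5 := (h2.trans h3).sub (hH.const_mul_left J)
  have h6 := uniq4 (a := J * t0 - (a ^ 3 * b0 - kxx * a + m * fxx))
    (b := J * t1 - (3 * a ^ 2 * b * b0 + a ^ 2 * r * b1 - kxx * b - km * a + n * fxx + m * fm))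
    (c := J * t2 - (3 * a * b ^ 2 * b0 + 2 * a * b * r * b1 + a * r ^ 2 * b2 - km * b - kyy * a
      + n * fm + m * fyy))
    (d := J * t3 - (b ^ 3 * b0 + b ^ 2 * r * b1 + b * r ^ 2 * b2 + r ^ 3 * b3 - kyy * b + n * fyy))
    (by
      refine h5.congr' ?_ (Eventually.of_forall fun _ => rfl)
      filter_upwards [hD] with P hP
      have e : m / a + r * P / (a + b * P) = (m + n * P) / (a + b * P) := by
        rw [hr, hJ]; field_simp; ring
      simp only [Function.comp, e, hHG]
      field_simp
      ring)
  obtain ⟨e0, e1, e2, e3⟩ := h6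
  exact ⟨by linarith, by linarith, by linarith, by linarith⟩

/-- the formulas for the Taylor coefficients of the transformed right hand side -/
structure Coef (B : ℝ × ℝ × ℝ → ℝ) (f k : ℝ × ℝ → ℝ) (q : ℝ × ℝ) : Prop where
  t0 : Jac f k q * T B f k (q.1, q.2, 0) = dx f q ^ 3 * B (f q, k q, dx k q / dx f q)
    - dx (dx k) q * dx f q + dx k q * dx (dx f) q
  t1 : Jac f k q * ep (T B f k) (q.1, q.2, 0)
    = 3 * dx f q ^ 2 * dy f q * B (f q, k q, dx k q / dx f q)
    + dx f q ^ 2 * (Jac f k q / dx f q) * ep B (f q, k q, dx k q / dx f q)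
    - dx (dx k) q * dy f q - (dx (dy k) q + dy (dx k) q) * dx f q + dy k q * dx (dx f) q
    + dx k q * (dx (dy f) q + dy (dx f) q)
  t2 : Jac f k q * c2 (T B f k) (q.1, q.2, 0)
    = 3 * dx f q * dy f q ^ 2 * B (f q, k q, dx k q / dx f q)
    + 2 * dx f q * dy f q * (Jac f k q / dx f q) * ep B (f q, k q, dx k q / dx f q)
    + dx f q * (Jac f k q / dx f q) ^ 2 * c2 B (f q, k q, dx k q / dx f q)
    - (dx (dy k) q + dy (dx k) q) * dy f q - dy (dy k) q * dx f q
    + dy k q * (dx (dy f) q + dy (dx f) q) + dx k q * dy (dy f) q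
  t3 : Jac f k q * c3 (T B f k) (q.1, q.2, 0)
    = dy f q ^ 3 * B (f q, k q, dx k q / dx f q)
    + dy f q ^ 2 * (Jac f k q / dx f q) * ep B (f q, k q, dx k q / dx f q)
    + dy f q * (Jac f k q / dx f q) ^ 2 * c2 B (f q, k q, dx k q / dx f q)
    + (Jac f k q / dx f q) ^ 3 * c3 B (f q, k q, dx k q / dx f q)
    - dy (dy k) q * dy f q + dy k q * dy (dy f) q

lemma coefT {B : ℝ × ℝ × ℝ → ℝ} {f k : ℝ × ℝ → ℝ} {q : ℝ × ℝ}
    (hB : AnalyticAt ℝ B (f q, k q, dx k q / dx f q))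
    (hT : AnalyticAt ℝ (T B f k) (q.1, q.2, 0)) (ha : dx f q ≠ 0) (hJ : Jac f k q ≠ 0) :
    Coef B f k q := by
  have e1 := expand hB
  have e2 := expand hT
  simp only [zero_add] at e2
  have := coefAlg (G := fun p => B (f q, k q, p)) (H := fun P => T B f k (q.1, q.2, P)) ha
    (J := Jac f k q) (a := dx f q) (b := dy f q) (m := dx k q) (n := dy k q)
    (fxx := dx (dx f) q) (fm := dx (dy f) q + dy (dx f) q) (fyy := dy (dy f) q)
    (kxx := dx (dx k) q) (km := dx (dy k) q + dy (dx k) q) (kyy := dy (dy k) q)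
    rfl hJ rfl e1 e2 (fun P => rfl)
  exact ⟨this.1, this.2.1, this.2.2.1, this.2.2.2⟩

lemma tendsto_in : Tendsto (fun q : ℝ × ℝ => ((q.1, q.2, 0) : ℝ × ℝ × ℝ)) (𝓝 0) (𝓝 0) := by
  have : ContinuousAt (fun q : ℝ × ℝ => ((q.1, q.2, 0) : ℝ × ℝ × ℝ)) 0 := by fun_prop
  exact this

lemma Good.tendsto {f k : ℝ × ℝ → ℝ} (h : Good f k) :
    Tendsto (fun q : ℝ × ℝ => ((f q, k q, dx k q / dx f q) : ℝ × ℝ × ℝ)) (𝓝 0) (𝓝 0) := by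
  have := h.anf.continuousAt.prodMk (h.ank.continuousAt.prodMk
    ((an_dx h.ank).continuousAt.div (an_dx h.anf).continuousAt h.fx))
  simp only [ContinuousAt, h.f0, h.k0, Pi.div_apply, h.kx, zero_div] at this
  exact this

lemma Good.coef {B : ℝ × ℝ × ℝ → ℝ} {f k : ℝ × ℝ → ℝ} (h : Good f k) (hB : AnalyticAt ℝ B 0) :
    ∀ᶠ q in 𝓝 (0 : ℝ × ℝ), Coef B f k q := by
  filter_upwards [h.tendsto.eventually hB.eventually_analyticAt,
    tendsto_in.eventually (an_T h hB).eventually_analyticAt,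
    (an_dx h.anf).continuousAt.eventually_ne h.fx, hJc h] with q h1 h2 h3 h4
  exact coefT h1 h2 h3 h4

end NF

namespace NF

lemma ode_curve {E : Type*} [NormedAddCommGroup E] [NormedSpace ℝ E] [CompleteSpace E]
    {f : E → E} {e0 : E} (hf : AnalyticAt ℝ f e0) :
    ∃ γ : ℝ → E, AnalyticAt ℝ γ 0 ∧ γ 0 = e0 ∧ ∀ᶠ t in 𝓝 (0:ℝ), HasDerivAt γ (f (γ t)) t := by
  obtain ⟨S, h1, h2, h3⟩ := ode1 hf
  refine ⟨fun t => S (t, e0), ?_, h2.self_of_nhds, ?_⟩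
  · exact AnalyticAt.comp (g := S) (f := fun t : ℝ => (t, e0)) h1 (by fun_prop)
  · have : ContinuousAt (fun t : ℝ => (t, e0)) 0 := by fun_prop
    exact this.eventually h3

lemma hd_fst {E F : Type*} [NormedAddCommGroup E] [NormedSpace ℝ E] [NormedAddCommGroup F]
    [NormedSpace ℝ F] {γ : ℝ → E × F} {v : E × F} {t : ℝ} (h : HasDerivAt γ v t) :
    HasDerivAt (fun s => (γ s).1) v.1 t :=
  (hasFDerivAt_fst (𝕜 := ℝ) (p := γ t)).comp_hasDerivAt t h

lemma hd_snd {E F : Type*} [NormedAddCommGroup E] [NormedSpace ℝ E] [NormedAddCommGroup F]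
    [NormedSpace ℝ F] {γ : ℝ → E × F} {v : E × F} {t : ℝ} (h : HasDerivAt γ v t) :
    HasDerivAt (fun s => (γ s).2) v.2 t :=
  (hasFDerivAt_snd (𝕜 := ℝ) (p := γ t)).comp_hasDerivAt t h

lemma an_comp3 {E : Type*} [NormedAddCommGroup E] [NormedSpace ℝ E] {C : ℝ × ℝ × ℝ → ℝ}
    {a b c : E → ℝ} {e : E} (hC : AnalyticAt ℝ C (a e, b e, c e)) (ha : AnalyticAt ℝ a e)
    (hb : AnalyticAt ℝ b e) (hc : AnalyticAt ℝ c e) :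
    AnalyticAt ℝ (fun x => C (a x, b x, c x)) e :=
  AnalyticAt.comp (g := C) (f := fun x => (a x, b x, c x)) hC (ha.prod (hb.prod hc))

lemma tendsto_Y : Tendsto (fun q : ℝ × ℝ => q.2) (𝓝 0) (𝓝 0) := by
  have : ContinuousAt (fun q : ℝ × ℝ => q.2) 0 := by fun_prop
  exact this

lemma tendsto_0Y : Tendsto (fun Y : ℝ => ((0, Y) : ℝ × ℝ)) (𝓝 0) (𝓝 0) := by
  have : ContinuousAt (fun Y : ℝ => ((0, Y) : ℝ × ℝ)) 0 := by fun_prop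
  exact this

/-- derivatives of functions affine in the first variable -/
structure Aff (k : ℝ × ℝ → ℝ) (α1 α2 β β1 β2 : ℝ → ℝ) (q : ℝ × ℝ) : Prop where
  x : dx k q = β q.2
  y : dy k q = α1 q.2 + β1 q.2 * q.1
  xx : dx (dx k) q = 0
  xy : dx (dy k) q = β1 q.2
  yx : dy (dx k) q = β1 q.2
  yy : dy (dy k) q = α2 q.2 + β2 q.2 * q.1

lemma an_aff {α β : ℝ → ℝ} {q : ℝ × ℝ} (hα : AnalyticAt ℝ α q.2) (hβ : AnalyticAt ℝ β q.2) :
    AnalyticAt ℝ (fun q : ℝ × ℝ => α q.2 + β q.2 * q.1) q := by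
  have h1 : AnalyticAt ℝ (fun q : ℝ × ℝ => α q.2) q :=
    AnalyticAt.comp (g := α) (f := fun q : ℝ × ℝ => q.2) hα (by fun_prop)
  have h2 : AnalyticAt ℝ (fun q : ℝ × ℝ => β q.2) q :=
    AnalyticAt.comp (g := β) (f := fun q : ℝ × ℝ => q.2) hβ (by fun_prop)
  exact h1.add (h2.mul (by fun_prop))

lemma aff {α α1 α2 β β1 β2 : ℝ → ℝ} (hα : AnalyticAt ℝ α 0) (hβ : AnalyticAt ℝ β 0)
    (h1 : ∀ᶠ Y in 𝓝 0, HasDerivAt α (α1 Y) Y) (h2 : ∀ᶠ Y in 𝓝 0, HasDerivAt α1 (α2 Y) Y)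
    (h3 : ∀ᶠ Y in 𝓝 0, HasDerivAt β (β1 Y) Y) (h4 : ∀ᶠ Y in 𝓝 0, HasDerivAt β1 (β2 Y) Y) :
    ∀ᶠ q in 𝓝 (0 : ℝ × ℝ), Aff (fun q : ℝ × ℝ => α q.2 + β q.2 * q.1) α1 α2 β β1 β2 q := by
  set k : ℝ × ℝ → ℝ := fun q : ℝ × ℝ => α q.2 + β q.2 * q.1 with hk
  have hx : ∀ (α β : ℝ → ℝ) (q : ℝ × ℝ), 
      HasDerivAt (fun X : ℝ => α q.2 + β q.2 * X) (β q.2) q.1 := by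
    intro α β q
    simpa using ((hasDerivAt_id' q.1).const_mul (β q.2)).const_add (α q.2)
  have ank : ∀ᶠ q in 𝓝 (0 : ℝ × ℝ), AnalyticAt ℝ k q :=
    (an_aff (q := 0) hα hβ).eventually_analyticAt
  have e1 : dx k =ᶠ[𝓝 0] fun q => β q.2 + (fun _ => (0:ℝ)) q.2 * q.1 := by
    filter_upwards [ank] with q hq
    simp only [zero_mul, add_zero]
    exact dx_eq (x := q.1) (y := q.2) hq (hx α β q)
  have e2 : dy k =ᶠ[𝓝 0] fun q => α1 q.2 + β1 q.2 * q.1 := by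
    filter_upwards [ank, tendsto_Y.eventually h1, tendsto_Y.eventually h3] with q hq q1 q3
    exact dy_eq (x := q.1) (y := q.2) hq (q1.add (q3.mul_const q.1))
  filter_upwards [ank, e1.eventuallyEq_nhds, e2.eventuallyEq_nhds, tendsto_Y.eventually h2,
    tendsto_Y.eventually h3, tendsto_Y.eventually h4] with q hq q1 q2 a2 b1 b2
  have cx : ContinuousAt (fun X : ℝ => (X, q.2)) q.1 := by fun_prop
  have cy : ContinuousAt (fun Y : ℝ => (q.1, Y)) q.2 := by fun_prop
  refine ⟨?_, q2.self_of_nhds, ?_, ?_, ?_, ?_⟩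
  · simpa using q1.self_of_nhds
  · refine dx_eq (x := q.1) (y := q.2) (an_dx hq) ?_
    exact ((hx β (fun _ => 0) q)).congr_of_eventuallyEq (cx.eventually q1)
  · refine dx_eq (x := q.1) (y := q.2) (an_dy hq) ?_
    exact ((hx α1 β1 q)).congr_of_eventuallyEq (cx.eventually q2)
  · refine dy_eq (x := q.1) (y := q.2) (an_dx hq) ?_
    refine HasDerivAt.congr_of_eventuallyEq ?_ (cy.eventually q1)
    simpa using b1
  · refine dy_eq (x := q.1) (y := q.2) (an_dy hq) ?_
    refine HasDerivAt.congr_of_eventuallyEq ?_ (cy.eventually q2)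
    exact a2.add (b2.mul_const q.1)

/-! ### Step 1 -/

noncomputable def F1 (v s b0 b1 b2 b3 : ℝ) : ℝ :=
  -(v ^ 3 * b0 + v ^ 2 * (1 - v * s) * b1 + v * (1 - v * s) ^ 2 * b2 + (1 - v * s) ^ 3 * b3)

noncomputable def F2 (v s w g2 b0 b1 b2 b0Y b1Y b0u b1u b2u : ℝ) : ℝ :=
  ((1 - v * s) / 3) * (2 * ((3 * g2 * b0 + 3 * v * b0Y) / (1 - v * s)
      + (3 * v * b0 - 2 * w) * (g2 * s + v * w) / (1 - v * s) ^ 2 + b1Y)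
    - ((3 * v ^ 2 * b0u + 2 * v * (w * b1 + (1 - v * s) * b1u) + 2 * (1 - v * s) * w * b2
        + (1 - v * s) ^ 2 * b2u) / (1 - v * s)
      - (3 * v ^ 2 * b0 + 2 * v * (1 - v * s) * b1 + (1 - v * s) ^ 2 * b2 - 2 * w * v + s * g2) * w
        / (1 - v * s) ^ 2))

lemma alg1 {v s w g2 b0 b1 b2 b0Y b1Y b0u b1u b2u s2 t1 t2 t1Y t2x J : ℝ} (hJ : J = 1 - v * s)
    (hJ0 : J ≠ 0) (h1 : J * t1 = 3 * v * b0 + J * b1 - 2 * w)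
    (h2 : J * t2 = 3 * v ^ 2 * b0 + 2 * v * J * b1 + J ^ 2 * b2 - 2 * w * v + s * g2)
    (h3 : -(g2 * s + v * w) * t1 + J * t1Y = 3 * g2 * b0 + 3 * v * b0Y - (g2 * s + v * w) * b1
      + J * b1Y - 2 * s2)
    (h4 : w * t2 + J * t2x = 3 * v ^ 2 * b0u + 2 * v * (w * b1 + J * b1u) + 2 * J * w * b2
      + J ^ 2 * b2u - s2)
    (hs2 : s2 = F2 v s w g2 b0 b1 b2 b0Y b1Y b0u b1u b2u) : t2x = 2 * t1Y := by
  rw [F2, ← hJ] at hs2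
  field_simp at hs2
  have : J ^ 2 * (t2x - 2 * t1Y) = 0 := by
    linear_combination J * h4 - 2 * J * h3 - w * h2 - 2 * (g2 * s + v * w) * h1 + hs2
  have h5 := (mul_eq_zero.1 this).resolve_left (pow_ne_zero 2 hJ0)
  linarith

end NF

namespace NF

lemma step1_ode {B : ℝ × ℝ × ℝ → ℝ} (hB : AnalyticAt ℝ B 0) :
    ∃ g v s w g2 s2 : ℝ → ℝ, AnalyticAt ℝ g 0 ∧ AnalyticAt ℝ s 0 ∧ g 0 = 0 ∧ v 0 = 0 ∧ s 0 = 0 ∧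
    ContinuousAt v 0 ∧ ∀ᶠ Y in 𝓝 (0:ℝ), HasDerivAt g (v Y) Y ∧ HasDerivAt v (g2 Y) Y ∧
      HasDerivAt s (w Y) Y ∧ HasDerivAt w (s2 Y) Y ∧
      g2 Y = F1 (v Y) (s Y) (B (g Y, Y, s Y)) (ep B (g Y, Y, s Y)) (c2 B (g Y, Y, s Y))
        (c3 B (g Y, Y, s Y)) ∧
      s2 Y = F2 (v Y) (s Y) (w Y) (g2 Y) (B (g Y, Y, s Y)) (ep B (g Y, Y, s Y))
        (c2 B (g Y, Y, s Y))
        (ex B (g Y, Y, s Y) * v Y + ey B (g Y, Y, s Y) * 1 + ep B (g Y, Y, s Y) * w Y)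
        (ex (ep B) (g Y, Y, s Y) * v Y + ey (ep B) (g Y, Y, s Y) * 1
          + ep (ep B) (g Y, Y, s Y) * w Y)
        (ex B (g Y, Y, s Y) * 1 + ey B (g Y, Y, s Y) * s Y + ep B (g Y, Y, s Y) * 0)
        (ex (ep B) (g Y, Y, s Y) * 1 + ey (ep B) (g Y, Y, s Y) * s Y
          + ep (ep B) (g Y, Y, s Y) * 0)
        (ex (c2 B) (g Y, Y, s Y) * 1 + ey (c2 B) (g Y, Y, s Y) * s Y
          + ep (c2 B) (g Y, Y, s Y) * 0) := by
  let K : (ℝ × ℝ × ℝ → ℝ) → ℝ × ℝ × ℝ × ℝ × ℝ → ℝ := fun C e => C (e.2.1, e.1, e.2.2.2.1)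
  have hK : ∀ C, AnalyticAt ℝ C 0 → AnalyticAt ℝ (K C) 0 := by
    intro C hC
    exact an_comp3 (C := C) (a := fun e : ℝ × ℝ × ℝ × ℝ × ℝ => e.2.1)
      (b := fun e => e.1) (c := fun e => e.2.2.2.1) hC (by fun_prop) (by fun_prop) (by fun_prop)
  let G : ℝ × ℝ × ℝ × ℝ × ℝ → ℝ := fun e => F1 e.2.2.1 e.2.2.2.1 (K B e) (K (ep B) e) (K (c2 B) e)
    (K (c3 B) e)
  let H : ℝ × ℝ × ℝ × ℝ × ℝ → ℝ := fun e => F2 e.2.2.1 e.2.2.2.1 e.2.2.2.2 (G e) (K B e)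
    (K (ep B) e) (K (c2 B) e)
    (K (ex B) e * e.2.2.1 + K (ey B) e * 1 + K (ep B) e * e.2.2.2.2)
    (K (ex (ep B)) e * e.2.2.1 + K (ey (ep B)) e * 1 + K (ep (ep B)) e * e.2.2.2.2)
    (K (ex B) e * 1 + K (ey B) e * e.2.2.2.1 + K (ep B) e * 0)
    (K (ex (ep B)) e * 1 + K (ey (ep B)) e * e.2.2.2.1 + K (ep (ep B)) e * 0)
    (K (ex (c2 B)) e * 1 + K (ey (c2 B)) e * e.2.2.2.1 + K (ep (c2 B)) e * 0)
  have a0 := hK B hB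
  have a1 := hK (ep B) (by fun_prop)
  have a2 := hK (c2 B) (by fun_prop)
  have a3 := hK (c3 B) (by fun_prop)
  have a4 := hK (ex B) (by fun_prop)
  have a5 := hK (ey B) (by fun_prop)
  have a6 := hK (ex (ep B)) (by fun_prop)
  have a7 := hK (ey (ep B)) (by fun_prop)
  have a8 := hK (ep (ep B)) (by fun_prop)
  have a9 := hK (ex (c2 B)) (by fun_prop)
  have a10 := hK (ey (c2 B)) (by fun_prop)
  have a11 := hK (ep (c2 B)) (by fun_prop)
  have hG : AnalyticAt ℝ G 0 := by
    simp only [G, F1]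
    clear_value K
    fun_prop
  have hH : AnalyticAt ℝ H 0 := by
    simp only [H, F2]
    clear_value G K
    fun_prop (disch := simp)
  have hF : AnalyticAt ℝ (fun e : ℝ × ℝ × ℝ × ℝ × ℝ =>
      (((1:ℝ), e.2.2.1, G e, e.2.2.2.2, H e) : ℝ × ℝ × ℝ × ℝ × ℝ)) 0 := by
    clear_value G H
    fun_prop
  obtain ⟨γ, h1, h2, h3⟩ := ode_curve hF
  have hY : ∀ᶠ Y in 𝓝 (0:ℝ), (γ Y).1 = Y := by
    obtain ⟨ε, hε, hb⟩ := Metric.eventually_nhds_iff_ball.1 h3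
    filter_upwards [Metric.ball_mem_nhds (0:ℝ) hε] with Y hYb
    have hc : ∀ x ∈ Metric.ball (0:ℝ) ε, HasDerivAt (fun t => (γ t).1 - t) 0 x := by
      intro x hx
      have := (hd_fst (hb x hx)).sub (hasDerivAt_id' x)
      convert! this using 1
      simp
    have := (convex_ball (0:ℝ) ε).is_const_of_fderivWithin_eq_zero (𝕜 := ℝ)
      (f := fun t => (γ t).1 - t)
      (fun x hx => (hc x hx).differentiableAt.differentiableWithinAt) (fun x hx => by
        rw [fderivWithin_of_isOpen Metric.isOpen_ball hx]
        ext; simpa using (hc x hx).deriv) (Metric.mem_ball_self hε) hYb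
    simp only [h2, Prod.fst_zero, sub_zero] at this
    linarith
  refine ⟨fun Y => (γ Y).2.1, fun Y => (γ Y).2.2.1, fun Y => (γ Y).2.2.2.1,
    fun Y => (γ Y).2.2.2.2, fun Y => G (γ Y), fun Y => H (γ Y), by fun_prop, by fun_prop,
    by simp [h2], by simp [h2], by simp [h2], ?_, ?_⟩
  · have : AnalyticAt ℝ (fun Y => (γ Y).2.2.1) 0 := by fun_prop
    exact this.continuousAt
  filter_upwards [h3, hY] with Y hd hYY
  refine ⟨hd_fst (hd_snd hd), hd_fst (hd_snd (hd_snd hd)), hd_fst (hd_snd (hd_snd (hd_snd hd))),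
    hd_snd (hd_snd (hd_snd (hd_snd hd))), ?_, ?_⟩
  · simp only [G, K, hYY]
  · simp only [H, K, hYY]

lemma step1 {B : ℝ × ℝ × ℝ → ℝ} (hB : AnalyticAt ℝ B 0) :
    ∃ B', Rel B B' ∧ AnalyticAt ℝ B' 0 ∧ ∀ᶠ Y in 𝓝 (0:ℝ), c3 B' (0, Y, 0) = 0 ∧
      ex (c2 B') (0, Y, 0) = 2 * ey (ep B') (0, Y, 0) := by
  obtain ⟨g, v, s, w, g2, s2, ang, ans, g0, v0, s0, cv, hode⟩ := step1_ode hB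
  have hf := aff (α := g) (α1 := v) (α2 := g2) (β := fun _ => 1) (β1 := fun _ => 0)
    (β2 := fun _ => 0) ang analyticAt_const (hode.mono fun Y h => h.1) (hode.mono fun Y h => h.2.1)
    (Eventually.of_forall fun Y => hasDerivAt_const _ _)
    (Eventually.of_forall fun Y => hasDerivAt_const _ _)
  have hk := aff (α := fun Y => Y) (α1 := fun _ => 1) (α2 := fun _ => 0) (β := s) (β1 := w)
    (β2 := s2) analyticAt_id ans
    (Eventually.of_forall fun Y => hasDerivAt_id' _)
    (Eventually.of_forall fun Y => hasDerivAt_const _ _)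
    (hode.mono fun Y h => h.2.2.1) (hode.mono fun Y h => h.2.2.2.1)
  have ff : ∀ q : ℝ × ℝ, (fun q : ℝ × ℝ => g q.2 + (fun _ => (1:ℝ)) q.2 * q.1) q
    = g q.2 + 1 * q.1 := fun q => rfl
  have kk : ∀ q : ℝ × ℝ, (fun q : ℝ × ℝ => (fun Y => Y) q.2 + s q.2 * q.1) q
    = q.2 + s q.2 * q.1 := fun q => rfl
  have anf : AnalyticAt ℝ (fun q : ℝ × ℝ => g q.2 + (fun _ => (1:ℝ)) q.2 * q.1) 0 :=
    an_aff (q := 0) ang analyticAt_const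
  have ank : AnalyticAt ℝ (fun q : ℝ × ℝ => (fun Y => Y) q.2 + s q.2 * q.1) 0 :=
    an_aff (q := 0) analyticAt_id ans
  generalize (fun q : ℝ × ℝ => g q.2 + (fun _ => (1:ℝ)) q.2 * q.1) = f at hf ff anf
  generalize (fun q : ℝ × ℝ => (fun Y => Y) q.2 + s q.2 * q.1) = k at hk kk ank
  have hg : Good f k := by
    have hf0 := hf.self_of_nhds
    have hk0 := hk.self_of_nhds
    refine ⟨anf, ank, ?_, ?_, ?_, ?_, ?_⟩
    · rw [ff]; simp [g0]
    · rw [kk]; simp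
    · rw [hf0.x]; simp
    · rw [hk0.x]; simp [s0]
    · rw [hk0.y]; simp
  have anT := an_T hg hB
  refine ⟨T B f k, ⟨f, k, hg, Eventually.of_forall fun _ => rfl⟩, anT, ?_⟩
  have hJ0 : ∀ᶠ Y in 𝓝 (0:ℝ), 1 - v Y * s Y ≠ 0 := by
    have : ContinuousAt (fun Y => 1 - v Y * s Y) 0 :=
      continuousAt_const.sub (cv.mul ans.continuousAt)
    exact this.eventually_ne (by simp [v0])
  filter_upwards [tendsto_0Y.eventually hf.eventually_nhds,
    tendsto_0Y.eventually hk.eventually_nhds, hode.eventually_nhds, hJ0,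
    tendsto_0Y.eventually (hg.coef hB).eventually_nhds,
    tendsto_0Y.eventually (tendsto_in.eventually anT.eventually_analyticAt),
    tendsto_0Y.eventually (hg.tendsto.eventually hB.eventually_analyticAt)]
    with Y h1 h2 h3 hJ h5 anTY anBY
  have r1 := h1.self_of_nhds
  have r2 := h2.self_of_nhds
  have r3 := h3.self_of_nhds
  have r5 := h5.self_of_nhds
  have cy : ContinuousAt (fun y : ℝ => ((0, y) : ℝ × ℝ)) Y := by fun_prop
  have cx : ContinuousAt (fun X : ℝ => ((X, Y) : ℝ × ℝ)) 0 := by fun_prop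
  rw [r1.x, r2.x, ff, kk] at anBY
  simp only [mul_zero, add_zero, div_one] at anBY
  obtain ⟨dg, dv, ds, dw, eg2, es2⟩ := r3
  have J1 : ∀ q, Aff f v g2 (fun _ => 1) (fun _ => 0) (fun _ => 0) q →
      Aff k (fun _ => 1) (fun _ => 0) s w s2 q → Jac f k q = 1 + w q.2 * q.1 - v q.2 * s q.2 := by
    intro q a1 a2
    rw [Jac, a1.x, a1.y, a2.x, a2.y]; ring
  have e1 : ∀ q, Coef B f k q → Aff f v g2 (fun _ => 1) (fun _ => 0) (fun _ => 0) q →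
      Aff k (fun _ => 1) (fun _ => 0) s w s2 q →
      (1 + w q.2 * q.1 - v q.2 * s q.2) * ep (T B f k) (q.1, q.2, 0) =
      3 * v q.2 * B (g q.2 + q.1, q.2 + s q.2 * q.1, s q.2)
      + (1 + w q.2 * q.1 - v q.2 * s q.2) * ep B (g q.2 + q.1, q.2 + s q.2 * q.1, s q.2)
        - 2 * w q.2 := by
    intro q c a1 a2
    have := c.t1
    rw [J1 q a1 a2, a1.x, a1.y, a1.xx, a1.xy, a1.yx, a2.x, a2.y, a2.xx, a2.xy, a2.yx, ff, kk]
      at this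
    simp only [div_one, one_mul] at this
    rw [this]; ring
  have e2 : ∀ q, Coef B f k q → Aff f v g2 (fun _ => 1) (fun _ => 0) (fun _ => 0) q →
      Aff k (fun _ => 1) (fun _ => 0) s w s2 q →
      (1 + w q.2 * q.1 - v q.2 * s q.2) * c2 (T B f k) (q.1, q.2, 0) =
      3 * v q.2 ^ 2 * B (g q.2 + q.1, q.2 + s q.2 * q.1, s q.2)
      + 2 * v q.2 * ((1 + w q.2 * q.1 - v q.2 * s q.2)
        * ep B (g q.2 + q.1, q.2 + s q.2 * q.1, s q.2))
      + (1 + w q.2 * q.1 - v q.2 * s q.2) ^ 2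
        * c2 B (g q.2 + q.1, q.2 + s q.2 * q.1, s q.2)
        - (2 * w q.2 * v q.2 + s2 q.2 * q.1 - s q.2 * g2 q.2) := by
    intro q c a1 a2
    have := c.t2
    rw [J1 q a1 a2, a1.x, a1.y, a1.xy, a1.yx, a1.yy, a2.x, a2.y, a2.xy, a2.yx, a2.yy, ff, kk]
      at this
    simp only [div_one, one_mul] at this
    rw [this]; ring
  constructor
  · have := r5.t3
    rw [J1 _ r1 r2, r1.x, r1.y, r1.yy, r2.x, r2.y, r2.yy, ff, kk] at this
    simp only [div_one, one_mul, mul_zero, add_zero] at this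
    rw [eg2, F1] at this
    have h0 : (1 - v Y * s Y) * c3 (T B f k) (0, Y, 0) = 0 := by rw [this]; ring
    exact (mul_eq_zero.1 h0).resolve_left hJ
  · -- derivative along `Y`
    have LY : (fun y => (1 - v y * s y) * ep (T B f k) (0, y, 0)) =ᶠ[𝓝 Y]
        fun y => 3 * v y * B (g y, y, s y) + (1 - v y * s y) * ep B (g y, y, s y) - 2 * w y := by
      filter_upwards [cy.eventually h1, cy.eventually h2, cy.eventually h5] with y a1 a2 c
      have := e1 _ c a1 a2
      simpa using this
    have dL := ((hasDerivAt_const Y (1:ℝ)).sub (dv.mul ds)).mul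
      (chain3 (c := ep (T B f k)) (X := fun _ => 0) (Y := fun y => y) (P := fun _ => 0)
        (an_ep anTY).differentiableAt (hasDerivAt_const Y 0) (hasDerivAt_id' Y)
        (hasDerivAt_const Y 0))
    have dR := (((dv.const_mul 3).mul (chain3 (c := B) (X := g) (Y := fun y => y) (P := s)
        anBY.differentiableAt dg (hasDerivAt_id' Y) ds)).add
      (((hasDerivAt_const Y (1:ℝ)).sub (dv.mul ds)).mul
        (chain3 (c := ep B) (X := g) (Y := fun y => y) (P := s)
        (an_ep anBY).differentiableAt dg (hasDerivAt_id' Y) ds))).sub (dw.const_mul 2)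
    have q1 := dL.unique (dR.congr_of_eventuallyEq LY)
    -- derivative along `X`
    have LX : (fun X => (1 + w Y * X - v Y * s Y) * c2 (T B f k) (X, Y, 0)) =ᶠ[𝓝 0]
        fun X => 3 * v Y ^ 2 * B (g Y + X, Y + s Y * X, s Y)
      + 2 * v Y * ((1 + w Y * X - v Y * s Y) * ep B (g Y + X, Y + s Y * X, s Y))
      + (1 + w Y * X - v Y * s Y) ^ 2 * c2 B (g Y + X, Y + s Y * X, s Y)
        - (2 * w Y * v Y + s2 Y * X - s Y * g2 Y) := by
      filter_upwards [cx.eventually h1, cx.eventually h2, cx.eventually h5] with X a1 a2 c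
      exact e2 _ c a1 a2
    have lin : ∀ a b : ℝ, HasDerivAt (fun X : ℝ => a + b * X) b 0 := fun a b => by
      simpa using ((hasDerivAt_id' (0:ℝ)).const_mul b).const_add a
    have dJ := (lin 1 (w Y)).sub_const (v Y * s Y)
    have lin1 : HasDerivAt (fun X : ℝ => g Y + X) 1 0 := (hasDerivAt_id' (0:ℝ)).const_add _
    have ch : ∀ C, AnalyticAt ℝ C (g Y, Y, s Y) → HasDerivAt (fun X => C (g Y + X, Y + s Y * X, s Y))
        (ex C (g Y, Y, s Y) * 1 + ey C (g Y, Y, s Y) * s Y + ep C (g Y, Y, s Y) * 0) 0 := by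
      intro C hC
      have := chain3 (c := C) (X := fun X => g Y + X) (Y := fun X => Y + s Y * X)
        (P := fun _ => s Y) (t := 0) (by simpa using hC.differentiableAt) lin1 (lin Y (s Y))
        (hasDerivAt_const 0 (s Y))
      simpa only [mul_zero, add_zero] using this
    have dL' := dJ.mul (chain3 (c := c2 (T B f k)) (X := fun X => X) (Y := fun _ => Y)
        (P := fun _ => 0) (t := 0)
        (an_c2 anTY).differentiableAt (hasDerivAt_id' 0) (hasDerivAt_const 0 Y)
        (hasDerivAt_const 0 0))
    have dR' := ((((ch B anBY).const_mul (3 * v Y ^ 2)).add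
      ((dJ.mul (ch _ (an_ep anBY))).const_mul (2 * v Y))).add
      ((dJ.pow 2).mul (ch _ (an_c2 anBY)))).sub
      ((lin (2 * w Y * v Y) (s2 Y)).sub_const (s Y * g2 Y))
    have q2 := dL'.unique (dR'.congr_of_eventuallyEq LX)
    have p1 := e1 _ r5 r1 r2
    have p2 := e2 _ r5 r1 r2
    simp only [mul_zero, add_zero, mul_one, zero_add, zero_sub, Pi.mul_apply, Pi.pow_apply,
      Pi.sub_apply] at q1 q2 p1 p2 es2
    refine alg1 (J := 1 - v Y * s Y) (t2 := c2 (T B f k) (0, Y, 0)) rfl hJ p1 ?_ ?_ ?_ es2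
    · rw [p2]; ring
    · linear_combination q1
    · linear_combination q2

end NF

namespace NF

lemma const_line {E : Type*} [NormedAddCommGroup E] [NormedSpace ℝ E] {u : ℝ → E} {ε : ℝ}
    (h : ∀ x ∈ Metric.ball (0:ℝ) ε, HasDerivAt u 0 x) {t : ℝ} (ht : t ∈ Metric.ball (0:ℝ) ε) :
    u t = u 0 := by
  have hε : 0 < ε := Metric.pos_of_mem_ball ht
  refine (convex_ball (0:ℝ) ε).is_const_of_fderivWithin_eq_zero (𝕜 := ℝ)
      (fun x hx => (h x hx).differentiableAt.differentiableWithinAt) (fun x hx => by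
        rw [fderivWithin_of_isOpen Metric.isOpen_ball hx]
        ext; simpa using (h x hx).deriv) ht (Metric.mem_ball_self hε)

lemma ode_par {E : Type*} [NormedAddCommGroup E] [NormedSpace ℝ E] [CompleteSpace E]
    {F : ℝ × ℝ × E → E} {e0 : E} (hF : AnalyticAt ℝ F (0, 0, e0)) {i : ℝ → E}
    (hi : AnalyticAt ℝ i 0) (hi0 : i 0 = e0) :
    ∃ σ : ℝ × ℝ → E, AnalyticAt ℝ σ 0 ∧ (∀ᶠ Y in 𝓝 (0:ℝ), σ (0, Y) = i Y) ∧
      ∀ᶠ q in 𝓝 (0 : ℝ × ℝ), HasDerivAt (fun t => σ (t, q.2)) (F (q.1, q.2, σ q)) q.1 := by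
  have hf : AnalyticAt ℝ (fun e : ℝ × ℝ × E => ((1:ℝ), (0:ℝ), F e)) (0, 0, e0) := by fun_prop
  obtain ⟨S, h1, h2, h3⟩ := ode1 hf
  have hin : AnalyticAt ℝ (fun q : ℝ × ℝ => (q.1, ((0:ℝ), q.2, i q.2))) 0 := by
    have : AnalyticAt ℝ (fun q : ℝ × ℝ => i q.2) 0 :=
      AnalyticAt.comp (g := i) (f := fun q : ℝ × ℝ => q.2) hi (by fun_prop)
    fun_prop
  have hin0 : ((0 : ℝ × ℝ).1, ((0:ℝ), (0 : ℝ × ℝ).2, i (0 : ℝ × ℝ).2)) = (0, 0, 0, e0) := by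
    simp [hi0]
  set s : ℝ × ℝ → ℝ × ℝ × E := fun q => S (q.1, (0, q.2, i q.2)) with hs
  have hsa : AnalyticAt ℝ s 0 := AnalyticAt.comp (g := S) (by rw [hin0]; exact h1) hin
  have hs3 : ∀ᶠ q in 𝓝 (0 : ℝ × ℝ), HasDerivAt (fun t => s (t, q.2))
      ((1:ℝ), (0:ℝ), F (s q)) q.1 := by
    have := hin.continuousAt
    rw [ContinuousAt, hin0] at this
    exact this.eventually h3
  have hs0 : ∀ᶠ Y in 𝓝 (0:ℝ), s (0, Y) = (0, Y, i Y) := by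
    have : ContinuousAt (fun Y : ℝ => (((0:ℝ), Y, i Y) : ℝ × ℝ × E)) 0 :=
      continuousAt_const.prodMk (continuousAt_id.prodMk hi.continuousAt)
    rw [ContinuousAt] at this
    simp only [hi0] at this
    exact this.eventually h2
  have hpr : ∀ᶠ q in 𝓝 (0 : ℝ × ℝ), (s q).1 = q.1 ∧ (s q).2.1 = q.2 := by
    obtain ⟨ε, hε, hb⟩ := Metric.eventually_nhds_iff_ball.1 hs3
    filter_upwards [Metric.ball_mem_nhds (0 : ℝ × ℝ) hε, tendsto_Y.eventually hs0] with q hq hq0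
    have hqb : q.1 ∈ Metric.ball (0:ℝ) ε ∧ q.2 ∈ Metric.ball (0:ℝ) ε := by
      have : q ∈ Metric.ball (0:ℝ) ε ×ˢ Metric.ball (0:ℝ) ε := by
        rw [ball_prod_same]; exact hq
      exact this
    have hd : ∀ x ∈ Metric.ball (0:ℝ) ε, HasDerivAt (fun t => s (t, q.2))
      ((1:ℝ), (0:ℝ), F (s (x, q.2))) x := by
      intro x hx
      refine hb (x, q.2) ?_
      have : (x, q.2) ∈ Metric.ball (0:ℝ) ε ×ˢ Metric.ball (0:ℝ) ε := ⟨hx, hqb.2⟩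
      rw [ball_prod_same] at this; exact this
    have u1 := const_line (u := fun t => (s (t, q.2)).1 - t) (ε := ε) (fun x hx => by
      have := (hd_fst (hd x hx)).sub (hasDerivAt_id' x)
      convert! this using 1
      simp) hqb.1
    have u2 := const_line (u := fun t => (s (t, q.2)).2.1) (ε := ε) (fun x hx =>
      hd_fst (hd_snd (hd x hx))) hqb.1
    simp only [hq0, sub_zero] at u1 u2
    exact ⟨by linarith, u2⟩
  refine ⟨fun q => (s q).2.2, by fun_prop, hs0.mono fun Y h => by simp only [h], ?_⟩
  filter_upwards [hs3, hpr] with q h h'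
  have h4 := hd_snd (hd_snd h)
  have e : s q = (q.1, q.2, (s q).2.2) := by rw [← h'.1, ← h'.2]
  rw [← e]
  exact h4

lemma ep_c2 {B : ℝ × ℝ × ℝ → ℝ} {z : ℝ × ℝ × ℝ} (hB : AnalyticAt ℝ B z) :
    ep (c2 B) z = 3 * c3 B z := by
  have : HasDerivAt (fun q => c2 B (z.1, z.2.1, q)) (ep (ep (ep B)) z / 2) z.2.2 :=
    (hasDeriv_p (x := z.1) (y := z.2.1) (p := z.2.2) (an_ep (an_ep hB))).div_const 2
  rw [(hasDeriv_p (x := z.1) (y := z.2.1) (p := z.2.2) (an_c2 hB)).unique this, c3]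
  ring

lemma step2_ode {B : ℝ × ℝ × ℝ → ℝ} (hB : AnalyticAt ℝ B 0) :
    ∃ k : ℝ × ℝ → ℝ, AnalyticAt ℝ k 0 ∧ (∀ᶠ Y in 𝓝 (0:ℝ), k (0, Y) = Y) ∧
      (∀ᶠ Y in 𝓝 (0:ℝ), dx k (0, Y) = 0) ∧
      ∀ᶠ q in 𝓝 (0 : ℝ × ℝ), dx (dx k) q = B (q.1, k q, dx k q) := by
  have hF : AnalyticAt ℝ (fun e : ℝ × ℝ × ℝ × ℝ => (e.2.2.2, B (e.1, e.2.2.1, e.2.2.2)))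
      (0, 0, 0, 0) := by
    have := an_comp3 (C := B) (a := fun e : ℝ × ℝ × ℝ × ℝ => e.1) (b := fun e => e.2.2.1)
      (c := fun e => e.2.2.2) (e := (0, 0, 0, 0)) hB (by fun_prop) (by fun_prop) (by fun_prop)
    fun_prop
  obtain ⟨σ, h1, h2, h3⟩ := ode_par hF (i := fun Y => (Y, 0)) (by fun_prop) rfl
  have an1 : AnalyticAt ℝ (fun q => (σ q).1) 0 := by fun_prop
  have an2 : AnalyticAt ℝ (fun q => (σ q).2) 0 := by fun_prop
  have e1 : dx (fun q => (σ q).1) =ᶠ[𝓝 0] fun q => (σ q).2 := by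
    filter_upwards [h3, an1.eventually_analyticAt] with q hq ha
    exact dx_eq (x := q.1) (y := q.2) ha (hd_fst hq)
  refine ⟨fun q => (σ q).1, an1, ?_, ?_, ?_⟩
  · filter_upwards [h2] with Y h; rw [h]
  · filter_upwards [h2, tendsto_0Y.eventually e1] with Y h h'; rw [h', h]
  · filter_upwards [h3, an2.eventually_analyticAt, dx_congr e1, e1] with q hq ha h h'
    rw [h, h']
    exact dx_eq (x := q.1) (y := q.2) ha (hd_snd hq)

lemma step2 {B : ℝ × ℝ × ℝ → ℝ} (hB : AnalyticAt ℝ B 0)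
    (hN : ∀ᶠ Y in 𝓝 (0:ℝ), c3 B (0, Y, 0) = 0 ∧ ex (c2 B) (0, Y, 0) = 2 * ey (ep B) (0, Y, 0)) :
    ∃ B', Rel B B' ∧ AnalyticAt ℝ B' 0 ∧ (∀ᶠ q in 𝓝 (0 : ℝ × ℝ), B' (q.1, q.2, 0) = 0) ∧
    ∀ᶠ Y in 𝓝 (0:ℝ), c3 B' (0, Y, 0) = 0 ∧
      ex (c2 B') (0, Y, 0) = 2 * ey (ep B') (0, Y, 0) := by
  obtain ⟨k, ank, k0, kx0, kxx⟩ := step2_ode hB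
  have hf := aff (α := fun _ => 0) (α1 := fun _ => 0) (α2 := fun _ => 0) (β := fun _ => 1)
    (β1 := fun _ => 0)
    (β2 := fun _ => 0) analyticAt_const analyticAt_const
    (Eventually.of_forall fun Y => hasDerivAt_const _ _)
    (Eventually.of_forall fun Y => hasDerivAt_const _ _)
    (Eventually.of_forall fun Y => hasDerivAt_const _ _)
    (Eventually.of_forall fun Y => hasDerivAt_const _ _)
  have ff : ∀ q : ℝ × ℝ, (fun q : ℝ × ℝ => (fun _ => (0:ℝ)) q.2 + (fun _ => (1:ℝ)) q.2 * q.1) q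
    = q.1 := fun q => by simp
  have anf : AnalyticAt ℝ (fun q : ℝ × ℝ => (fun _ => (0:ℝ)) q.2 + (fun _ => (1:ℝ)) q.2 * q.1) 0 :=
    an_aff (q := 0) analyticAt_const analyticAt_const
  generalize (fun q : ℝ × ℝ => (fun _ => (0:ℝ)) q.2 + (fun _ => (1:ℝ)) q.2 * q.1) = f at hf ff anf
  -- normal derivatives along `X = 0`
  have ky0 : ∀ᶠ Y in 𝓝 (0:ℝ), dy k (0, Y) = 1 := by
    filter_upwards [k0.eventually_nhds, tendsto_0Y.eventually ank.eventually_analyticAt] with Y h ha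
    exact dy_eq ha ((hasDerivAt_id' Y).congr_of_eventuallyEq h)
  have kyy0 : ∀ᶠ Y in 𝓝 (0:ℝ), dy (dy k) (0, Y) = 0 := by
    filter_upwards [ky0.eventually_nhds, tendsto_0Y.eventually (an_dy ank).eventually_analyticAt]
      with Y h ha
    exact dy_eq ha ((hasDerivAt_const Y (1:ℝ)).congr_of_eventuallyEq h)
  have kxy0 : ∀ᶠ Y in 𝓝 (0:ℝ), dy (dx k) (0, Y) = 0 := by
    filter_upwards [kx0.eventually_nhds, tendsto_0Y.eventually (an_dx ank).eventually_analyticAt]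
      with Y h ha
    exact dy_eq ha ((hasDerivAt_const Y (0:ℝ)).congr_of_eventuallyEq h)
  have kxyy0 : ∀ᶠ Y in 𝓝 (0:ℝ), dy (dy (dx k)) (0, Y) = 0 := by
    filter_upwards [kxy0.eventually_nhds,
      tendsto_0Y.eventually (an_dy (an_dx ank)).eventually_analyticAt] with Y h ha
    exact dy_eq ha ((hasDerivAt_const Y (0:ℝ)).congr_of_eventuallyEq h)
  have comm : dx (dy k) =ᶠ[𝓝 0] dy (dx k) := by
    filter_upwards [ank.eventually_analyticAt] with q hq using dx_dy_comm hq
  have comm2 : ∀ᶠ q in 𝓝 (0 : ℝ × ℝ), dx (dy (dy k)) q = dy (dy (dx k)) q := by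
    filter_upwards [(an_dy ank).eventually_analyticAt, dy_congr comm] with q hq h
    rw [dx_dy_comm hq, h]
  have hg : Good f k := by
    have hf0 := hf.self_of_nhds
    refine ⟨anf, ank, by rw [ff]; simp, k0.self_of_nhds, by rw [hf0.x]; simp, kx0.self_of_nhds, ?_⟩
    have : dy k (0, 0) = 1 := ky0.self_of_nhds
    change dy k (0, 0) ≠ 0
    rw [this]; simp
  have anT := an_T hg hB
  have J1 : ∀ q, Aff f (fun _ => 0) (fun _ => 0) (fun _ => 1) (fun _ => 0) (fun _ => 0) q →
      Jac f k q = dy k q := by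
    intro q a1
    rw [Jac, a1.x, a1.y]; ring
  refine ⟨T B f k, ⟨f, k, hg, Eventually.of_forall fun _ => rfl⟩, anT, ?_, ?_⟩
  · filter_upwards [hg.coef hB, kxx, hf, hJc hg] with q c e a hJ
    have := c.t0
    rw [a.x, a.xx, ff, e] at this
    simp only [div_one, one_pow, one_mul, mul_one, mul_zero, add_zero, sub_self] at this
    exact (mul_eq_zero.1 this).resolve_left hJ
  have hyk : ∀ᶠ Y in 𝓝 (0:ℝ), dx (dy k) (0, Y) = 0 := by
    filter_upwards [kxy0, tendsto_0Y.eventually comm] with Y h h'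
    rw [h', h]
  filter_upwards [hN, k0.eventually_nhds, kx0.eventually_nhds, ky0.eventually_nhds,
    kyy0, kxy0.eventually_nhds, kxyy0, hyk.eventually_nhds,
    tendsto_0Y.eventually comm2,
    tendsto_0Y.eventually hf.eventually_nhds,
    tendsto_0Y.eventually (hg.coef hB).eventually_nhds,
    tendsto_0Y.eventually (tendsto_in.eventually anT.eventually_analyticAt),
    tendsto_0Y.eventually (tendsto_in.eventually hB.eventually_analyticAt),
    tendsto_0Y.eventually ank.eventually_analyticAt]
    with Y hN0 k0 kx0 ky0 kyy0 kxy0 kxyy0 kyx0 comm2 h1 h5 anTY anBY ankY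
  have r1 := h1.self_of_nhds
  have r5 := h5.self_of_nhds
  have K0 : k (0, Y) = Y := k0.self_of_nhds
  have Kx0 : dx k (0, Y) = 0 := kx0.self_of_nhds
  have Ky0 : dy k (0, Y) = 1 := ky0.self_of_nhds
  have Kxy0 : dy (dx k) (0, Y) = 0 := kxy0.self_of_nhds
  have Kyx0 : dx (dy k) (0, Y) = 0 := kyx0.self_of_nhds
  have cy : ContinuousAt (fun y : ℝ => ((0, y) : ℝ × ℝ)) Y := by fun_prop
  have cx : ContinuousAt (fun X : ℝ => ((X, Y) : ℝ × ℝ)) 0 := by fun_prop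
  constructor
  · have := r5.t3
    rw [J1 _ r1, r1.x, r1.y, r1.yy, ff, K0, Kx0, Ky0, kyy0] at this
    simp only [zero_div, hN0.1] at this
    simpa using this
  have q1 : ey (ep (T B f k)) (0, Y, 0) = ey (ep B) (0, Y, 0) := by
    have LY : (fun y => ep (T B f k) (0, y, 0)) =ᶠ[𝓝 Y] fun y => ep B (0, y, 0) := by
      filter_upwards [cy.eventually h1, cy.eventually h5, k0, kx0, ky0, kxy0, kyx0]
        with y a1 c b0 b1 b2 b3 b4
      have := c.t1
      rw [J1 _ a1, a1.x, a1.y, a1.xx, a1.xy, a1.yx, ff, b0, b1, b2, b3, b4] at this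
      simpa using this
    have ch : ∀ C, AnalyticAt ℝ C (0, Y, 0) → HasDerivAt (fun y => C (0, y, 0))
        (ey C (0, Y, 0)) Y := by
      intro C hC
      have := chain3 (c := C) (X := fun _ => 0) (Y := fun y => y) (P := fun _ => 0) (t := Y)
        hC.differentiableAt (hasDerivAt_const Y 0) (hasDerivAt_id' Y) (hasDerivAt_const Y 0)
      simpa using this
    exact (ch _ (an_ep anTY)).unique ((ch _ (an_ep anBY)).congr_of_eventuallyEq LY)
  have q2 : ex (c2 (T B f k)) (0, Y, 0) = ex (c2 B) (0, Y, 0) := by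
    have LX : (fun X => dy k (X, Y) * c2 (T B f k) (X, Y, 0)) =ᶠ[𝓝 0]
        fun X => dy k (X, Y) ^ 2 * c2 B (X, k (X, Y), dx k (X, Y)) - dy (dy k) (X, Y) := by
      filter_upwards [cx.eventually h1, cx.eventually h5] with X a1 c
      have := c.t2
      rw [J1 _ a1, a1.x, a1.y, a1.xy, a1.yx, a1.yy, ff] at this
      simp only [div_one] at this
      rw [this]; ring
    have dJ := hasDeriv_x (an_dy ankY)
    have dL := dJ.mul (chain3 (c := c2 (T B f k)) (X := fun X => X) (Y := fun _ => Y)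
        (P := fun _ => 0) (t := 0)
        (an_c2 anTY).differentiableAt (hasDerivAt_id' 0) (hasDerivAt_const 0 Y)
        (hasDerivAt_const 0 0))
    have dR := ((dJ.pow 2).mul (chain3 (c := c2 B) (X := fun X => X) (Y := fun X => k (X, Y))
        (P := fun X => dx k (X, Y)) (t := 0)
        (by rw [K0, Kx0]; exact (an_c2 anBY).differentiableAt) (hasDerivAt_id' 0) (hasDeriv_x ankY)
        (hasDeriv_x (an_dx ankY)))).sub (hasDeriv_x (an_dy (an_dy ankY)))
    have := dL.unique (dR.congr_of_eventuallyEq LX)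
    simp only [Pi.pow_apply, Ky0, Kyx0, comm2, kxyy0, K0, Kx0] at this
    rw [ep_c2 anBY, hN0.1] at this
    simpa using this
  rw [q1, q2, hN0.2]

end NF

namespace NF

lemma step3_ode {B : ℝ × ℝ × ℝ → ℝ} (hB : AnalyticAt ℝ B 0) :
    ∃ f : ℝ × ℝ → ℝ, AnalyticAt ℝ f 0 ∧ (∀ᶠ Y in 𝓝 (0:ℝ), f (0, Y) = 0) ∧
      (∀ᶠ Y in 𝓝 (0:ℝ), dx f (0, Y) = 1) ∧
      ∀ᶠ q in 𝓝 (0 : ℝ × ℝ), dx (dx f) q = - ep B (f q, q.2, 0) * dx f q ^ 2 := by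
  have hF : AnalyticAt ℝ (fun e : ℝ × ℝ × ℝ × ℝ =>
      (e.2.2.2, - ep B (e.2.2.1, e.2.1, 0) * e.2.2.2 ^ 2)) (0, 0, 0, 1) := by
    have := an_comp3 (C := ep B) (a := fun e : ℝ × ℝ × ℝ × ℝ => e.2.2.1) (b := fun e => e.2.1)
      (c := fun e => 0) (e := (0, 0, 0, 1)) (an_ep hB) (by fun_prop) (by fun_prop) (by fun_prop)
    fun_prop
  obtain ⟨σ, h1, h2, h3⟩ := ode_par hF (i := fun Y => (0, 1)) (by fun_prop) rfl
  have an1 : AnalyticAt ℝ (fun q => (σ q).1) 0 := by fun_prop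
  have an2 : AnalyticAt ℝ (fun q => (σ q).2) 0 := by fun_prop
  have e1 : dx (fun q => (σ q).1) =ᶠ[𝓝 0] fun q => (σ q).2 := by
    filter_upwards [h3, an1.eventually_analyticAt] with q hq ha
    exact dx_eq (x := q.1) (y := q.2) ha (hd_fst hq)
  refine ⟨fun q => (σ q).1, an1, ?_, ?_, ?_⟩
  · filter_upwards [h2] with Y h; rw [h]
  · filter_upwards [h2, tendsto_0Y.eventually e1] with Y h h'; rw [h', h]
  · filter_upwards [h3, an2.eventually_analyticAt, dx_congr e1, e1] with q hq ha h h'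
    rw [h, h']
    exact dx_eq (x := q.1) (y := q.2) ha (hd_snd hq)

lemma ex_line {C : ℝ × ℝ × ℝ → ℝ} {x Y p : ℝ} (hC : AnalyticAt ℝ C (x, Y, p)) :
    HasDerivAt (fun X => C (X, Y, p)) (ex C (x, Y, p)) x := by
  have := chain3 (c := C) (X := fun X => X) (Y := fun _ => Y) (P := fun _ => p) (t := x)
    hC.differentiableAt (hasDerivAt_id' x) (hasDerivAt_const x Y) (hasDerivAt_const x p)
  simpa using this

lemma ey_line {C : ℝ × ℝ × ℝ → ℝ} {x Y p : ℝ} (hC : AnalyticAt ℝ C (x, Y, p)) :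
    HasDerivAt (fun y => C (x, y, p)) (ey C (x, Y, p)) Y := by
  have := chain3 (c := C) (X := fun _ => x) (Y := fun y => y) (P := fun _ => p) (t := Y)
    hC.differentiableAt (hasDerivAt_const Y x) (hasDerivAt_id' Y) (hasDerivAt_const Y p)
  simpa using this

lemma step3 {B : ℝ × ℝ × ℝ → ℝ} (hB : AnalyticAt ℝ B 0)
    (hB0 : ∀ᶠ q in 𝓝 (0 : ℝ × ℝ), B (q.1, q.2, 0) = 0)
    (hN : ∀ᶠ Y in 𝓝 (0:ℝ), c3 B (0, Y, 0) = 0 ∧ ex (c2 B) (0, Y, 0) = 2 * ey (ep B) (0, Y, 0)) :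
    ∃ B', Rel B B' ∧ AnalyticAt ℝ B' 0 ∧ (∀ᶠ q in 𝓝 (0 : ℝ × ℝ), B' (q.1, q.2, 0) = 0) ∧
    (∀ᶠ q in 𝓝 (0 : ℝ × ℝ), ep B' (q.1, q.2, 0) = 0) ∧
    ∀ᶠ Y in 𝓝 (0:ℝ), c3 B' (0, Y, 0) = 0 ∧ ex (c2 B') (0, Y, 0) = 0 := by
  obtain ⟨f, anf, f0, fx0, fxx⟩ := step3_ode hB
  have hk := aff (α := fun Y => Y) (α1 := fun _ => 1) (α2 := fun _ => 0) (β := fun _ => 0)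
    (β1 := fun _ => 0) (β2 := fun _ => 0) analyticAt_id analyticAt_const
    (Eventually.of_forall fun Y => hasDerivAt_id' _)
    (Eventually.of_forall fun Y => hasDerivAt_const _ _)
    (Eventually.of_forall fun Y => hasDerivAt_const _ _)
    (Eventually.of_forall fun Y => hasDerivAt_const _ _)
  have kk : ∀ q : ℝ × ℝ, (fun q : ℝ × ℝ => (fun Y => Y) q.2 + (fun _ => (0:ℝ)) q.2 * q.1) q
    = q.2 := fun q => by simp
  have ank : AnalyticAt ℝ (fun q : ℝ × ℝ => (fun Y => Y) q.2 + (fun _ => (0:ℝ)) q.2 * q.1) 0 :=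
    an_aff (q := 0) analyticAt_id analyticAt_const
  generalize (fun q : ℝ × ℝ => (fun Y => Y) q.2 + (fun _ => (0:ℝ)) q.2 * q.1) = k at hk kk ank
  -- normal derivatives along `X = 0`
  have fy0 : ∀ᶠ Y in 𝓝 (0:ℝ), dy f (0, Y) = 0 := by
    filter_upwards [f0.eventually_nhds, tendsto_0Y.eventually anf.eventually_analyticAt] with Y h ha
    exact dy_eq ha ((hasDerivAt_const Y (0:ℝ)).congr_of_eventuallyEq h)
  have fyy0 : ∀ᶠ Y in 𝓝 (0:ℝ), dy (dy f) (0, Y) = 0 := by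
    filter_upwards [fy0.eventually_nhds, tendsto_0Y.eventually (an_dy anf).eventually_analyticAt]
      with Y h ha
    exact dy_eq ha ((hasDerivAt_const Y (0:ℝ)).congr_of_eventuallyEq h)
  have fxy0 : ∀ᶠ Y in 𝓝 (0:ℝ), dy (dx f) (0, Y) = 0 := by
    filter_upwards [fx0.eventually_nhds, tendsto_0Y.eventually (an_dx anf).eventually_analyticAt]
      with Y h ha
    exact dy_eq ha ((hasDerivAt_const Y (1:ℝ)).congr_of_eventuallyEq h)
  have fxx0 : ∀ᶠ Y in 𝓝 (0:ℝ), dx (dx f) (0, Y) = - ep B (0, Y, 0) := by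
    filter_upwards [fx0, f0, tendsto_0Y.eventually fxx] with Y h h' h''
    rw [h'', h, h']; ring
  have fxxy0 : ∀ᶠ Y in 𝓝 (0:ℝ), dy (dx (dx f)) (0, Y) = - ey (ep B) (0, Y, 0) := by
    filter_upwards [fxx0.eventually_nhds,
      tendsto_0Y.eventually (an_dx (an_dx anf)).eventually_analyticAt,
      tendsto_0Y.eventually (tendsto_in.eventually hB.eventually_analyticAt)] with Y h ha hb
    exact dy_eq ha ((ey_line (an_ep hb)).neg.congr_of_eventuallyEq h)
  have comm : dx (dy f) =ᶠ[𝓝 0] dy (dx f) := by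
    filter_upwards [anf.eventually_analyticAt] with q hq using dx_dy_comm hq
  have comm2 : ∀ᶠ q in 𝓝 (0 : ℝ × ℝ), dx (dy (dx f)) q = dy (dx (dx f)) q := by
    filter_upwards [(an_dx anf).eventually_analyticAt] with q hq
    rw [dx_dy_comm hq]
  have hg : Good f k := by
    have hk0 := hk.self_of_nhds
    refine ⟨anf, ank, f0.self_of_nhds, by rw [kk]; simp, ?_, by rw [hk0.x], by rw [hk0.y]; simp⟩
    have : dx f (0, 0) = 1 := fx0.self_of_nhds
    change dx f (0, 0) ≠ 0
    rw [this]; simp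
  have anT := an_T hg hB
  have J1 : ∀ q, Aff k (fun _ => 1) (fun _ => 0) (fun _ => 0) (fun _ => 0) (fun _ => 0) q →
      Jac f k q = dx f q := by
    intro q a1
    rw [Jac, a1.x, a1.y]; ring
  have hB0' : ∀ᶠ q in 𝓝 (0 : ℝ × ℝ), B (f q, q.2, 0) = 0 := by
    have : ContinuousAt (fun q : ℝ × ℝ => (f q, q.2)) 0 :=
      anf.continuousAt.prodMk continuousAt_snd
    rw [ContinuousAt, hg.f0] at this
    exact this.eventually hB0
  refine ⟨T B f k, ⟨f, k, hg, Eventually.of_forall fun _ => rfl⟩, anT, ?_, ?_, ?_⟩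
  · filter_upwards [hg.coef hB, hB0', hk, hJc hg] with q c e a hJ
    have := c.t0
    rw [a.x, a.xx, kk, zero_div, e] at this
    simp only [mul_zero, zero_mul, add_zero, sub_self] at this
    exact (mul_eq_zero.1 this).resolve_left hJ
  · filter_upwards [hg.coef hB, hB0', fxx, hk, hJc hg] with q c e e' a hJ
    have := c.t1
    rw [a.x, a.y, a.xx, a.xy, a.yx, kk, zero_div, e, e', J1 q a, div_self (by rwa [← J1 q a])]
      at this
    rw [J1 q a] at hJ
    refine (mul_eq_zero.1 (this.trans ?_)).resolve_left hJ
    ring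
  filter_upwards [hN, f0, fx0, fy0, fyy0, fxy0, fxx0, fxxy0,
    tendsto_0Y.eventually hB0'.eventually_nhds,
    tendsto_0Y.eventually comm.eventuallyEq_nhds,
    tendsto_0Y.eventually comm2,
    tendsto_0Y.eventually hk.eventually_nhds,
    tendsto_0Y.eventually (hJc hg).eventually_nhds,
    tendsto_0Y.eventually (hg.coef hB).eventually_nhds,
    tendsto_0Y.eventually (tendsto_in.eventually anT.eventually_analyticAt),
    tendsto_0Y.eventually (tendsto_in.eventually hB.eventually_analyticAt),
    tendsto_0Y.eventually anf.eventually_analyticAt]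
    with Y hN0 f0 fx0 fy0 fyy0 fxy0 fxx0 fxxy0 B0 comm comm2 h1 hJ h5 anTY anBY anfY
  have r1 := h1.self_of_nhds
  have r5 := h5.self_of_nhds
  have B00 := B0.self_of_nhds
  have comm0 := comm.self_of_nhds
  have cx : ContinuousAt (fun X : ℝ => ((X, Y) : ℝ × ℝ)) 0 := by fun_prop
  constructor
  · have := r5.t3
    rw [J1 _ r1, r1.x, r1.y, r1.yy, kk, zero_div, fx0, fy0, fyy0, f0] at this
    simp only [hN0.1] at this
    simpa using this
  · have e2 : ∀ q, Coef B f k q → B (f q, q.2, 0) = 0 → dx (dy f) q = dy (dx f) q →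
        Aff k (fun _ => 1) (fun _ => 0) (fun _ => 0) (fun _ => 0) (fun _ => 0) q →
        Jac f k q ≠ 0 →
        dx f q * c2 (T B f k) (q.1, q.2, 0) = 2 * (dx f q * dy f q) * ep B (f q, q.2, 0)
          + dx f q * c2 B (f q, q.2, 0) + 2 * dy (dx f) q := by
      intro q c b cm a hJ
      have := c.t2
      rw [a.x, a.y, a.xy, a.yx, a.yy, kk, zero_div, b, cm, J1 q a,
        div_self (by rwa [← J1 q a])] at this
      rw [this]; ring
    have LX : (fun X => dx f (X, Y) * c2 (T B f k) (X, Y, 0)) =ᶠ[𝓝 0]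
        fun X => 2 * (dx f (X, Y) * dy f (X, Y)) * ep B (f (X, Y), Y, 0)
          + dx f (X, Y) * c2 B (f (X, Y), Y, 0) + 2 * dy (dx f) (X, Y) := by
      filter_upwards [cx.eventually h1, cx.eventually h5, cx.eventually hJ, cx.eventually B0,
        cx.eventually comm] with X a c j b cm
      exact e2 _ c b cm a j
    have p0 := e2 _ r5 B00 comm0 r1 hJ.self_of_nhds
    have ch : ∀ C, AnalyticAt ℝ C (0, Y, 0) → HasDerivAt (fun X => C (f (X, Y), Y, 0))
        (ex C (0, Y, 0)) 0 := by
      intro C hC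
      have := chain3 (c := C) (X := fun X => f (X, Y)) (Y := fun _ => Y) (P := fun _ => 0) (t := 0)
        (by rw [f0]; exact hC.differentiableAt) (hasDeriv_x anfY) (hasDerivAt_const 0 Y)
        (hasDerivAt_const 0 0)
      rw [f0, fx0] at this
      simpa using this
    have da := hasDeriv_x (an_dx anfY)
    have db := hasDeriv_x (an_dy anfY)
    have dL := da.mul (ex_line (an_c2 anTY))
    have dR := ((((da.mul db).const_mul 2).mul (ch _ (an_ep anBY))).add
      (da.mul (ch _ (an_c2 anBY)))).add ((hasDeriv_x (an_dy (an_dx anfY))).const_mul 2)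
    have := dL.unique (dR.congr_of_eventuallyEq LX)
    simp only [Pi.mul_apply, f0, fx0, fy0, fxx0, fxy0, comm0, comm2, fxxy0, mul_zero, zero_mul,
      add_zero, zero_add, one_mul] at this p0
    rw [p0, hN0.2] at this
    linear_combination this

end NF

namespace NF

lemma step4_ode {B : ℝ × ℝ × ℝ → ℝ} (hB : AnalyticAt ℝ B 0) :
    ∃ τ τ1 h h1 τ2 h2 : ℝ → ℝ, AnalyticAt ℝ τ 0 ∧ AnalyticAt ℝ h 0 ∧ ContinuousAt τ1 0 ∧
      τ 0 = 0 ∧ τ1 0 = 1 ∧ h 0 = 1 ∧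
      ∀ᶠ Y in 𝓝 (0:ℝ), HasDerivAt τ (τ1 Y) Y ∧ HasDerivAt τ1 (τ2 Y) Y ∧
      HasDerivAt h (h1 Y) Y ∧ HasDerivAt h1 (h2 Y) Y ∧
      τ2 Y = τ1 Y * (τ1 Y * c2 B (0, τ Y, 0) + 2 * h1 Y / h Y) ∧
      h2 Y = 2 * h1 Y ^ 2 / h Y - τ1 Y ^ 2 * h Y * ex (c3 B) (0, τ Y, 0) := by
  let K : (ℝ × ℝ × ℝ → ℝ) → ℝ × ℝ × ℝ × ℝ → ℝ := fun C e => C (0, e.1, 0)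
  have hK : ∀ C, AnalyticAt ℝ C 0 → AnalyticAt ℝ (K C) (0, 1, 1, 0) := by
    intro C hC
    exact an_comp3 (C := C) (a := fun e : ℝ × ℝ × ℝ × ℝ => 0)
      (b := fun e => e.1) (c := fun e => 0) hC (by fun_prop) (by fun_prop) (by fun_prop)
  have a2 := hK (c2 B) (by fun_prop)
  have a3 := hK (ex (c3 B)) (by fun_prop)
  let G : ℝ × ℝ × ℝ × ℝ → ℝ := fun e => e.2.1 * (e.2.1 * K (c2 B) e + 2 * e.2.2.2 / e.2.2.1)
  let H : ℝ × ℝ × ℝ × ℝ → ℝ := fun e => 2 * e.2.2.2 ^ 2 / e.2.2.1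
    - e.2.1 ^ 2 * e.2.2.1 * K (ex (c3 B)) e
  have hG : AnalyticAt ℝ G (0, 1, 1, 0) := by
    simp only [G]
    clear_value K
    fun_prop (disch := simp)
  have hH : AnalyticAt ℝ H (0, 1, 1, 0) := by
    simp only [H]
    clear_value K
    fun_prop (disch := simp)
  have hF : AnalyticAt ℝ (fun e : ℝ × ℝ × ℝ × ℝ =>
      ((e.2.1, G e, e.2.2.2, H e) : ℝ × ℝ × ℝ × ℝ)) (0, 1, 1, 0) := by
    clear_value G H
    fun_prop
  obtain ⟨γ, h1, h2, h3⟩ := ode_curve hF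
  refine ⟨fun Y => (γ Y).1, fun Y => (γ Y).2.1, fun Y => (γ Y).2.2.1,
    fun Y => (γ Y).2.2.2, fun Y => G (γ Y), fun Y => H (γ Y), by fun_prop, by fun_prop,
    ?_, by simp [h2], by simp [h2], by simp [h2], ?_⟩
  · have : AnalyticAt ℝ (fun Y => (γ Y).2.1) 0 := by fun_prop
    exact this.continuousAt
  filter_upwards [h3] with Y hd
  exact ⟨hd_fst hd, hd_fst (hd_snd hd), hd_fst (hd_snd (hd_snd hd)),
    hd_snd (hd_snd (hd_snd hd)), rfl, rfl⟩

lemma step4 {B : ℝ × ℝ × ℝ → ℝ} (hB : AnalyticAt ℝ B 0)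
    (hB0 : ∀ᶠ q in 𝓝 (0 : ℝ × ℝ), B (q.1, q.2, 0) = 0)
    (hB1 : ∀ᶠ q in 𝓝 (0 : ℝ × ℝ), ep B (q.1, q.2, 0) = 0)
    (hN : ∀ᶠ Y in 𝓝 (0:ℝ), c3 B (0, Y, 0) = 0 ∧ ex (c2 B) (0, Y, 0) = 0) :
    ∃ B', Rel B B' ∧ AnalyticAt ℝ B' 0 ∧ (∀ᶠ q in 𝓝 (0 : ℝ × ℝ), B' (q.1, q.2, 0) = 0) ∧
    (∀ᶠ q in 𝓝 (0 : ℝ × ℝ), ep B' (q.1, q.2, 0) = 0) ∧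
    ∀ᶠ Y in 𝓝 (0:ℝ), c2 B' (0, Y, 0) = 0 ∧ c3 B' (0, Y, 0) = 0 ∧ ex (c2 B') (0, Y, 0) = 0 ∧
      ex (c3 B') (0, Y, 0) = 0 := by
  obtain ⟨τ, τ1, h, h1, τ2, h2, anτ, anh, cτ1, τ0, τ10, h0, hode⟩ := step4_ode hB
  have hf := aff (α := fun _ => 0) (α1 := fun _ => 0) (α2 := fun _ => 0) (β := h) (β1 := h1)
    (β2 := h2) analyticAt_const anh
    (Eventually.of_forall fun Y => hasDerivAt_const _ _)
    (Eventually.of_forall fun Y => hasDerivAt_const _ _)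
    (hode.mono fun Y h => h.2.2.1) (hode.mono fun Y h => h.2.2.2.1)
  have hk := aff (α := τ) (α1 := τ1) (α2 := τ2) (β := fun _ => 0) (β1 := fun _ => 0)
    (β2 := fun _ => 0) anτ analyticAt_const (hode.mono fun Y h => h.1) (hode.mono fun Y h => h.2.1)
    (Eventually.of_forall fun Y => hasDerivAt_const _ _)
    (Eventually.of_forall fun Y => hasDerivAt_const _ _)
  have ff : ∀ q : ℝ × ℝ, (fun q : ℝ × ℝ => (fun _ => (0:ℝ)) q.2 + h q.2 * q.1) q
    = h q.2 * q.1 := fun q => by simp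
  have kk : ∀ q : ℝ × ℝ, (fun q : ℝ × ℝ => τ q.2 + (fun _ => (0:ℝ)) q.2 * q.1) q
    = τ q.2 := fun q => by simp
  have anf : AnalyticAt ℝ (fun q : ℝ × ℝ => (fun _ => (0:ℝ)) q.2 + h q.2 * q.1) 0 :=
    an_aff (q := 0) analyticAt_const anh
  have ank : AnalyticAt ℝ (fun q : ℝ × ℝ => τ q.2 + (fun _ => (0:ℝ)) q.2 * q.1) 0 :=
    an_aff (q := 0) anτ analyticAt_const
  generalize (fun q : ℝ × ℝ => (fun _ => (0:ℝ)) q.2 + h q.2 * q.1) = f at hf ff anf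
  generalize (fun q : ℝ × ℝ => τ q.2 + (fun _ => (0:ℝ)) q.2 * q.1) = k at hk kk ank
  have hg : Good f k := by
    have hf0 := hf.self_of_nhds
    have hk0 := hk.self_of_nhds
    refine ⟨anf, ank, ?_, ?_, ?_, ?_, ?_⟩
    · rw [ff]; simp
    · rw [kk]; simp [τ0]
    · rw [hf0.x]; simp [h0]
    · rw [hk0.x]
    · rw [hk0.y]; simp [τ10]
  have anT := an_T hg hB
  have cfk : Tendsto (fun q : ℝ × ℝ => (f q, k q)) (𝓝 0) (𝓝 0) := by
    have := anf.continuousAt.prodMk ank.continuousAt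
    rw [ContinuousAt, hg.f0, hg.k0] at this
    exact this
  have hB0' : ∀ᶠ q in 𝓝 (0 : ℝ × ℝ), B (f q, k q, 0) = 0 := cfk.eventually hB0
  have hB1' : ∀ᶠ q in 𝓝 (0 : ℝ × ℝ), ep B (f q, k q, 0) = 0 := cfk.eventually hB1
  have hτ : Tendsto τ (𝓝 0) (𝓝 0) := by
    have := anτ.continuousAt
    rwa [ContinuousAt, τ0] at this
  have hne : ∀ᶠ Y in 𝓝 (0:ℝ), h Y ≠ 0 := anh.continuousAt.eventually_ne (by simp [h0])
  have tne : ∀ᶠ Y in 𝓝 (0:ℝ), τ1 Y ≠ 0 := cτ1.eventually_ne (by simp [τ10])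
  have J1 : ∀ q, Aff f (fun _ => 0) (fun _ => 0) h h1 h2 q →
      Aff k τ1 τ2 (fun _ => 0) (fun _ => 0) (fun _ => 0) q → Jac f k q = h q.2 * τ1 q.2 := by
    intro q a1 a2
    rw [Jac, a1.x, a1.y, a2.x, a2.y]; ring
  refine ⟨T B f k, ⟨f, k, hg, Eventually.of_forall fun _ => rfl⟩, anT, ?_, ?_, ?_⟩
  · filter_upwards [hg.coef hB, hB0', hf, hk, hJc hg] with q c e a a' hJ
    have := c.t0
    rw [a'.x, a'.xx, zero_div, e] at this
    simp only [mul_zero, zero_mul, add_zero, sub_self] at this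
    exact (mul_eq_zero.1 this).resolve_left hJ
  · filter_upwards [hg.coef hB, hB0', hB1', hf, hk, hJc hg] with q c e e1 a a' hJ
    have := c.t1
    rw [a'.x, a'.xx, a'.xy, a'.yx, zero_div, e, e1, a.xx] at this
    simp only [mul_zero, zero_mul, add_zero, sub_self] at this
    exact (mul_eq_zero.1 this).resolve_left hJ
  filter_upwards [hτ.eventually hN, hode, hne, tne,
    tendsto_0Y.eventually hB0'.eventually_nhds,
    tendsto_0Y.eventually hB1'.eventually_nhds,
    tendsto_0Y.eventually hf.eventually_nhds,
    tendsto_0Y.eventually hk.eventually_nhds,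
    tendsto_0Y.eventually (hg.coef hB).eventually_nhds,
    tendsto_0Y.eventually (tendsto_in.eventually anT.eventually_analyticAt),
    hτ.eventually (tendsto_0Y.eventually (tendsto_in.eventually hB.eventually_analyticAt))]
    with Y hN hode hne tne B0 B1 hf hk hc anTY anBY
  obtain ⟨-, -, -, -, eτ, eh⟩ := hode
  have cx : ContinuousAt (fun X : ℝ => ((X, Y) : ℝ × ℝ)) 0 := by fun_prop
  have e2 : ∀ q, Coef B f k q → Aff f (fun _ => 0) (fun _ => 0) h h1 h2 q →
      Aff k τ1 τ2 (fun _ => 0) (fun _ => 0) (fun _ => 0) q →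
      B (f q, k q, 0) = 0 → ep B (f q, k q, 0) = 0 → h q.2 ≠ 0 →
      (h q.2 * τ1 q.2) * c2 (T B f k) (q.1, q.2, 0) =
        h q.2 * τ1 q.2 ^ 2 * c2 B (h q.2 * q.1, τ q.2, 0)
        + (2 * τ1 q.2 * h1 q.2 - τ2 q.2 * h q.2) := by
    intro q c a a' b b1 hq
    have := c.t2
    rw [J1 q a a', a'.x, zero_div, b, b1, a.x, a.y, a.xy, a.yx, a'.y, a'.xy, a'.yx, a'.yy, ff, kk]
      at this
    rw [this, mul_div_cancel_left₀ _ hq]; ring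
  have e3 : ∀ q, Coef B f k q → Aff f (fun _ => 0) (fun _ => 0) h h1 h2 q →
      Aff k τ1 τ2 (fun _ => 0) (fun _ => 0) (fun _ => 0) q →
      B (f q, k q, 0) = 0 → ep B (f q, k q, 0) = 0 → h q.2 ≠ 0 →
      (h q.2 * τ1 q.2) * c3 (T B f k) (q.1, q.2, 0) =
        q.1 * (h1 q.2 * τ1 q.2 ^ 2 * c2 B (h q.2 * q.1, τ q.2, 0)
        + (τ1 q.2 * h2 q.2 - τ2 q.2 * h1 q.2))
        + τ1 q.2 ^ 3 * c3 B (h q.2 * q.1, τ q.2, 0) := by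
    intro q c a a' b b1 hq
    have := c.t3
    rw [J1 q a a', a'.x, zero_div, b, b1, a.x, a.y, a.yy, a'.y, a'.yy, ff, kk] at this
    rw [this, mul_div_cancel_left₀ _ hq]; ring
  have ch : ∀ C, AnalyticAt ℝ C (0, τ Y, 0) → HasDerivAt (fun X => C (h Y * X, τ Y, 0))
      (ex C (0, τ Y, 0) * h Y) 0 := by
    intro C hC
    have := chain3 (c := C) (X := fun X => h Y * X) (Y := fun _ => τ Y) (P := fun _ => 0) (t := 0)
      (by simpa using hC.differentiableAt) ((hasDerivAt_id' (0:ℝ)).const_mul (h Y))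
      (hasDerivAt_const 0 (τ Y)) (hasDerivAt_const 0 0)
    simpa using this
  have p2 := e2 _ hc.self_of_nhds hf.self_of_nhds hk.self_of_nhds B0.self_of_nhds B1.self_of_nhds
    hne
  have p3 := e3 _ hc.self_of_nhds hf.self_of_nhds hk.self_of_nhds B0.self_of_nhds B1.self_of_nhds
    hne
  have hJ : h Y * τ1 Y ≠ 0 := mul_ne_zero hne tne
  simp only [mul_zero, zero_mul, zero_add] at p2 p3
  have ev : ∀ᶠ X in 𝓝 (0:ℝ), Coef B f k (X, Y) ∧ Aff f (fun _ => 0) (fun _ => 0) h h1 h2 (X, Y) ∧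
      Aff k τ1 τ2 (fun _ => 0) (fun _ => 0) (fun _ => 0) (X, Y) ∧
      B (f (X, Y), k (X, Y), 0) = 0 ∧ ep B (f (X, Y), k (X, Y), 0) = 0 := by
    filter_upwards [cx.eventually hc, cx.eventually hf, cx.eventually hk, cx.eventually B0,
      cx.eventually B1] with X a b c d e using ⟨a, b, c, d, e⟩
  refine ⟨?_, ?_, ?_, ?_⟩
  · refine (mul_eq_zero.1 (p2.trans ?_)).resolve_left hJ
    rw [eτ]; field_simp; ring
  · refine (mul_eq_zero.1 (p3.trans ?_)).resolve_left hJ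
    rw [hN.1]; ring
  · have LX : (fun X => (h Y * τ1 Y) * c2 (T B f k) (X, Y, 0)) =ᶠ[𝓝 0]
        fun X => h Y * τ1 Y ^ 2 * c2 B (h Y * X, τ Y, 0)
        + (2 * τ1 Y * h1 Y - τ2 Y * h Y) := by
      filter_upwards [ev] with X hX
      exact e2 _ hX.1 hX.2.1 hX.2.2.1 hX.2.2.2.1 hX.2.2.2.2 hne
    have dL := (ex_line (an_c2 anTY)).const_mul (h Y * τ1 Y)
    have dR := ((ch _ (an_c2 anBY)).const_mul (h Y * τ1 Y ^ 2)).add_const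
      (2 * τ1 Y * h1 Y - τ2 Y * h Y)
    have := dL.unique (dR.congr_of_eventuallyEq LX)
    refine (mul_eq_zero.1 (this.trans ?_)).resolve_left hJ
    rw [hN.2]; ring
  · have LX : (fun X => (h Y * τ1 Y) * c3 (T B f k) (X, Y, 0)) =ᶠ[𝓝 0]
        fun X => X * (h1 Y * τ1 Y ^ 2 * c2 B (h Y * X, τ Y, 0)
        + (τ1 Y * h2 Y - τ2 Y * h1 Y))
        + τ1 Y ^ 3 * c3 B (h Y * X, τ Y, 0) := by
      filter_upwards [ev] with X hX
      exact e3 _ hX.1 hX.2.1 hX.2.2.1 hX.2.2.2.1 hX.2.2.2.2 hne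
    have dL := (ex_line (an_c3 anTY)).const_mul (h Y * τ1 Y)
    have dR := ((hasDerivAt_id' (0:ℝ)).mul (((ch _ (an_c2 anBY)).const_mul (h1 Y * τ1 Y ^ 2)).add_const
      (τ1 Y * h2 Y - τ2 Y * h1 Y))).add ((ch _ (an_c3 anBY)).const_mul (τ1 Y ^ 3))
    have := dL.unique (dR.congr_of_eventuallyEq LX)
    refine (mul_eq_zero.1 (this.trans ?_)).resolve_left hJ
    simp only [mul_zero, zero_mul, add_zero, one_mul]
    rw [eh, eτ]; field_simp; ring

end NF

namespace NF

lemma ex_congr {k l : ℝ × ℝ × ℝ → ℝ} {p : ℝ × ℝ × ℝ} (h : k =ᶠ[𝓝 p] l) :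
    ex k =ᶠ[𝓝 p] ex l := by
  filter_upwards [h.fderiv (𝕜 := ℝ)] with q hq
  simp [ex, hq]

lemma ep_congr {k l : ℝ × ℝ × ℝ → ℝ} {p : ℝ × ℝ × ℝ} (h : k =ᶠ[𝓝 p] l) :
    ep k =ᶠ[𝓝 p] ep l := by
  filter_upwards [h.fderiv (𝕜 := ℝ)] with q hq
  simp [ep, hq]

lemma c2_congr {k l : ℝ × ℝ × ℝ → ℝ} {p : ℝ × ℝ × ℝ} (h : k =ᶠ[𝓝 p] l) :
    c2 k =ᶠ[𝓝 p] c2 l := by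
  filter_upwards [ep_congr (ep_congr h)] with q hq
  simp [c2, hq]

lemma c3_congr {k l : ℝ × ℝ × ℝ → ℝ} {p : ℝ × ℝ × ℝ} (h : k =ᶠ[𝓝 p] l) :
    c3 k =ᶠ[𝓝 p] c3 l := by
  filter_upwards [ep_congr (ep_congr (ep_congr h))] with q hq
  simp [c3, hq]

structure Nrm (C : ℝ × ℝ × ℝ → ℝ) : Prop where
  an : AnalyticAt ℝ C 0
  z0 : ∀ᶠ q in 𝓝 (0 : ℝ × ℝ), C (q.1, q.2, 0) = 0
  z1 : ∀ᶠ q in 𝓝 (0 : ℝ × ℝ), ep C (q.1, q.2, 0) = 0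
  zY : ∀ᶠ Y in 𝓝 (0:ℝ), c2 C (0, Y, 0) = 0 ∧ c3 C (0, Y, 0) = 0 ∧ ex (c2 C) (0, Y, 0) = 0 ∧
      ex (c3 C) (0, Y, 0) = 0

lemma Nrm.congr {C D : ℝ × ℝ × ℝ → ℝ} (h : Nrm C) (e : C =ᶠ[𝓝 0] D) : Nrm D := by
  have tY := tendsto_in.comp tendsto_0Y
  refine ⟨h.an.congr e, ?_, ?_, ?_⟩
  · filter_upwards [h.z0, tendsto_in.eventually e] with q a b
    rw [← b, a]
  · filter_upwards [h.z1, tendsto_in.eventually (ep_congr e)] with q a b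
    rw [← b, a]
  · filter_upwards [h.zY, tY.eventually (c2_congr e), tY.eventually (c3_congr e),
      tY.eventually (ex_congr (c2_congr e)), tY.eventually (ex_congr (c3_congr e))]
      with Y a b c d f
    simp only [Function.comp] at b c d f
    rw [← b, ← c, ← d, ← f]
    exact a

lemma exists_nrm {B : ℝ × ℝ × ℝ → ℝ} (hB : AnalyticAt ℝ B 0) :
    ∃ f k, Good f k ∧ Nrm (T B f k) := by
  obtain ⟨B1, r1, a1, n1⟩ := step1 hB
  obtain ⟨B2, r2, a2, z2, n2⟩ := step2 a1 n1
  obtain ⟨B3, r3, a3, z3, z3', n3⟩ := step3 a2 z2 n2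
  obtain ⟨B4, r4, a4, z4, z4', n4⟩ := step4 a3 z3 z3' n3
  obtain ⟨f, k, hg, he⟩ := ((r1.trans r2).trans r3).trans r4
  exact ⟨f, k, hg, Nrm.congr ⟨a4, z4, z4', n4⟩ he⟩

lemma Nrm.taylor {C : ℝ × ℝ × ℝ → ℝ} (h : Nrm C) :
    ∀ᶠ Yv in 𝓝 (0:ℝ),
        (∀ i : ℕ,
          iteratedDeriv i (fun Xv => C (Xv, Yv, 0)) 0 = 0 ∧
          iteratedDeriv i
            (fun Xv => deriv (fun Pv => C (Xv, Yv, Pv)) 0) 0 = 0) ∧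
        iteratedDeriv 2 (fun Pv => C (0, Yv, Pv)) 0 = 0 ∧
        iteratedDeriv 3 (fun Pv => C (0, Yv, Pv)) 0 = 0 ∧
        deriv (fun Xv => iteratedDeriv 2 (fun Pv => C (Xv, Yv, Pv)) 0) 0 = 0 ∧
        deriv (fun Xv => iteratedDeriv 3 (fun Pv => C (Xv, Yv, Pv)) 0) 0 = 0 := by
  filter_upwards [tendsto_0Y.eventually h.z0.eventually_nhds,
    tendsto_0Y.eventually h.z1.eventually_nhds,
    tendsto_0Y.eventually (tendsto_in.eventually h.an.eventually_analyticAt).eventually_nhds, h.zY]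
    with Y z0 z1 an zY
  have cx : ContinuousAt (fun X : ℝ => ((X, Y) : ℝ × ℝ)) 0 := by fun_prop
  have an0 : AnalyticAt ℝ C (0, Y, 0) := an.self_of_nhds
  have e0 : (fun X => C (X, Y, 0)) =ᶠ[𝓝 0] fun _ => (0:ℝ) := by
    filter_upwards [cx.eventually z0] with X hX using hX
  have e1 : (fun X => deriv (fun P => C (X, Y, P)) 0) =ᶠ[𝓝 0] fun _ => (0:ℝ) := by
    filter_upwards [cx.eventually z1, cx.eventually an] with X hX ha
    rw [(deriv_slice ha).self_of_nhds]
    exact hX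
  have e2 : (fun X => iteratedDeriv 2 (fun P => C (X, Y, P)) 0) =ᶠ[𝓝 0]
      fun X => 2 * c2 C (X, Y, 0) := by
    filter_upwards [cx.eventually an] with X ha using iter2 ha
  have e3 : (fun X => iteratedDeriv 3 (fun P => C (X, Y, P)) 0) =ᶠ[𝓝 0]
      fun X => 6 * c3 C (X, Y, 0) := by
    filter_upwards [cx.eventually an] with X ha using iter3 ha
  have zz : ∀ i : ℕ, iteratedDeriv i (fun _ : ℝ => (0:ℝ)) 0 = 0 := by
    intro i
    simp
  refine ⟨fun i => ⟨?_, ?_⟩, ?_, ?_, ?_, ?_⟩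
  · rw [e0.iteratedDeriv_eq i, zz]
  · rw [e1.iteratedDeriv_eq i, zz]
  · rw [iter2 an0, zY.1, mul_zero]
  · rw [iter3 an0, zY.2.1, mul_zero]
  · rw [e2.deriv_eq, ((ex_line (an_c2 an0)).const_mul 2).deriv, zY.2.2.1, mul_zero]
  · rw [e3.deriv_eq, ((ex_line (an_c3 an0)).const_mul 6).deriv, zY.2.2.2, mul_zero]

lemma exists_cle {f k : ℝ × ℝ → ℝ} {q : ℝ × ℝ} (hf : AnalyticAt ℝ f q) (hk : AnalyticAt ℝ k q)
    (hJ : Jac f k q ≠ 0) : ∃ L : (ℝ × ℝ) ≃L[ℝ] (ℝ × ℝ),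
      fderiv ℝ (fun q => (f q, k q)) q = (L : (ℝ × ℝ) →L[ℝ] (ℝ × ℝ)) := by
  have hd : fderiv ℝ (fun q => (f q, k q)) q = (fderiv ℝ f q).prod (fderiv ℝ k q) :=
    (hf.differentiableAt.hasFDerivAt.prodMk hk.differentiableAt.hasFDerivAt).fderiv
  have lin : ∀ (l : (ℝ × ℝ) →L[ℝ] ℝ) (u v : ℝ), l (u, v) = l (1, 0) * u + l (0, 1) * v := by
    intro l u v
    have : ((u, v) : ℝ × ℝ) = u • ((1 : ℝ), (0 : ℝ)) + v • ((0 : ℝ), (1 : ℝ)) := by simp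
    rw [this, map_add, map_smul, map_smul, smul_eq_mul, smul_eq_mul]
    ring
  let F : (ℝ × ℝ) →L[ℝ] ℝ := ContinuousLinearMap.fst ℝ ℝ ℝ
  let S : (ℝ × ℝ) →L[ℝ] ℝ := ContinuousLinearMap.snd ℝ ℝ ℝ
  let G : (ℝ × ℝ) →L[ℝ] (ℝ × ℝ) :=
    ((dy k q / Jac f k q) • F - (dy f q / Jac f k q) • S).prod
      ((dx f q / Jac f k q) • S - (dx k q / Jac f k q) • F)
  have hG : ∀ u v, G (u, v) = (dy k q / Jac f k q * u - dy f q / Jac f k q * v,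
      dx f q / Jac f k q * v - dx k q / Jac f k q * u) := fun u v => rfl
  have hP : ∀ u v, (fderiv ℝ f q).prod (fderiv ℝ k q) (u, v) =
      (dx f q * u + dy f q * v, dx k q * u + dy k q * v) := by
    intro u v
    rw [ContinuousLinearMap.prod_apply, lin, lin (fderiv ℝ k q)]
    rfl
  have hJ' := hJ
  refine ⟨ContinuousLinearEquiv.equivOfInverse ((fderiv ℝ f q).prod (fderiv ℝ k q)) G ?_ ?_, ?_⟩
  · rintro ⟨u, v⟩
    rw [hP, hG]
    ext
    · simp only; field_simp; rw [Jac]; ring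
    · simp only; field_simp; rw [Jac]; ring
  · rintro ⟨u, v⟩
    rw [hG, hP]
    ext
    · simp only; field_simp; rw [Jac]; ring
    · simp only; field_simp; rw [Jac]; ring
  · rw [hd]; rfl

lemma exists_inv {f k : ℝ × ℝ → ℝ} (h : Good f k) :
    ∃ e : OpenPartialHomeomorph (ℝ × ℝ) (ℝ × ℝ), (∀ q, e q = (f q, k q)) ∧ 0 ∈ e.source ∧
      (∀ q ∈ e.source, AnalyticAt ℝ f q ∧ AnalyticAt ℝ k q ∧ Jac f k q ≠ 0) ∧
      ∀ p ∈ e.target, AnalyticAt ℝ e.symm p := by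
  obtain ⟨L, hL⟩ := exists_cle h.anf h.ank h.jac
  have hs := (h.anf.prod h.ank).hasStrictFDerivAt
  rw [hL] at hs
  have hS : ∀ᶠ q in 𝓝 (0 : ℝ × ℝ), AnalyticAt ℝ f q ∧ AnalyticAt ℝ k q ∧ Jac f k q ≠ 0 :=
    h.anf.eventually_analyticAt.and (h.ank.eventually_analyticAt.and (hJc h))
  let e0 := hs.toOpenPartialHomeomorph (fun q => (f q, k q))
  let e := e0.restr {q | AnalyticAt ℝ f q ∧ AnalyticAt ℝ k q ∧ Jac f k q ≠ 0}
  have he : ∀ q, e q = (f q, k q) := fun q => rfl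
  have hsrc : ∀ q ∈ e.source, AnalyticAt ℝ f q ∧ AnalyticAt ℝ k q ∧ Jac f k q ≠ 0 := by
    intro q hq
    have := interior_subset (s := {q | AnalyticAt ℝ f q ∧ AnalyticAt ℝ k q ∧ Jac f k q ≠ 0}) hq.2
    exact this
  refine ⟨e, he, ⟨hs.mem_toOpenPartialHomeomorph_source, mem_interior_iff_mem_nhds.2 hS⟩, hsrc, ?_⟩
  intro p hp
  obtain ⟨a, b, c⟩ := hsrc _ (e.map_target hp)
  obtain ⟨L', hL'⟩ := exists_cle a b c
  have : (e : ℝ × ℝ → ℝ × ℝ) = fun q => (f q, k q) := funext he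
  refine e.analyticAt_symm (i := L') hp ?_ ?_
  · rw [this]; exact a.prod b
  · rw [this]; exact hL'

end NF

open NF

theorem stmt6 (B : ℝ × ℝ × ℝ → ℝ) (V : Set (ℝ × ℝ × ℝ))
    (hV : V ∈ nhds (0 : ℝ × ℝ × ℝ)) (hB : AnalyticOnNhd ℝ B V) :
    ∃ (φ ψ : ℝ × ℝ → ℝ) (U : Set (ℝ × ℝ)) (Bs : ℝ × ℝ × ℝ → ℝ)
      (W : Set (ℝ × ℝ × ℝ)),
      -- Φ = (φ,ψ) is a local diffeomorphism of a neighborhood U of 0,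
      -- fixing the origin
      U ∈ nhds (0 : ℝ × ℝ) ∧ φ 0 = 0 ∧ ψ 0 = 0 ∧
      ContDiffOn ℝ ⊤ (fun p => (φ p, ψ p)) U ∧
      InjOn (fun p : ℝ × ℝ => (φ p, ψ p)) U ∧
      IsOpen ((fun p : ℝ × ℝ => (φ p, ψ p)) '' U) ∧
      (∃ Φinv : ℝ × ℝ → ℝ × ℝ,
        ContDiffOn ℝ ⊤ Φinv ((fun p : ℝ × ℝ => (φ p, ψ p)) '' U) ∧
        ∀ p ∈ U, Φinv (φ p, ψ p) = p) ∧
      -- B* is real-analytic near 0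
      W ∈ nhds (0 : ℝ × ℝ × ℝ) ∧ AnalyticOnNhd ℝ Bs W ∧
      -- Taylor coefficient conditions on B*
      (∃ δ : ℝ, 0 < δ ∧ ∀ Yv ∈ Ioo (-δ) δ,
        (∀ i : ℕ,
          iteratedDeriv i (fun Xv => Bs (Xv, Yv, 0)) 0 = 0 ∧
          iteratedDeriv i
            (fun Xv => deriv (fun Pv => Bs (Xv, Yv, Pv)) 0) 0 = 0) ∧
        iteratedDeriv 2 (fun Pv => Bs (0, Yv, Pv)) 0 = 0 ∧
        iteratedDeriv 3 (fun Pv => Bs (0, Yv, Pv)) 0 = 0 ∧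
        deriv (fun Xv => iteratedDeriv 2 (fun Pv => Bs (Xv, Yv, Pv)) 0) 0 = 0 ∧
        deriv (fun Xv => iteratedDeriv 3 (fun Pv => Bs (Xv, Yv, Pv)) 0) 0 = 0) ∧
      -- transformation of solutions: for every solution y of y'' = B(x,y,y')
      -- with graph in U, data in V and (φ(x,y(x)))' ≠ 0, every function Y
      -- with Y(φ(x,y(x))) = ψ(x,y(x)) solves Y'' = B*(X,Y,Y') along the curve
      (∀ (y : ℝ → ℝ) (I : Set ℝ), IsOpen I →
        (∀ x ∈ I, (x, y x) ∈ U) →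
        (∀ x ∈ I, (x, y x, deriv y x) ∈ V) →
        (∀ x ∈ I, DifferentiableAt ℝ y x ∧ DifferentiableAt ℝ (deriv y) x) →
        (∀ x ∈ I, deriv (deriv y) x = B (x, y x, deriv y x)) →
        (∀ x ∈ I, deriv (fun t => φ (t, y t)) x ≠ 0) →
        ∀ Y : ℝ → ℝ,
          (∀ x ∈ I, DifferentiableAt ℝ Y (φ (x, y x)) ∧
            DifferentiableAt ℝ (deriv Y) (φ (x, y x))) →
          (∀ x ∈ I, Y (φ (x, y x)) = ψ (x, y x)) →
          ∀ x ∈ I,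
            deriv (deriv Y) (φ (x, y x)) =
              Bs (φ (x, y x), Y (φ (x, y x)), deriv Y (φ (x, y x)))) := by
  obtain ⟨f, k, hg, hN⟩ := exists_nrm (hB 0 (mem_of_mem_nhds hV))
  obtain ⟨e, he, h0, hsrc, hsymm⟩ := exists_inv hg
  have e0 : e 0 = 0 := by rw [he, hg.f0, hg.k0]; rfl
  have e0' : e.symm 0 = 0 := by rw [← e0, e.left_inv h0, e0]
  have him : (fun p : ℝ × ℝ => ((e.symm p).1, (e.symm p).2)) '' e.target = e.source :=
    e.symm.image_source_eq_target
  obtain ⟨δ, hδ, hT⟩ := Metric.eventually_nhds_iff_ball.1 hN.taylor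
  refine ⟨fun p => (e.symm p).1, fun p => (e.symm p).2, e.target, T B f k,
    {z | AnalyticAt ℝ (T B f k) z}, ?_, by simp [e0'], by simp [e0'], ?_, e.symm.injOn, ?_,
    ⟨e, ?_, fun p hp => e.right_inv hp⟩, hN.an.eventually_analyticAt, fun z hz => hz,
    ⟨δ, hδ, fun Y hY => hT Y ?_⟩, ?_⟩
  · exact e.open_target.mem_nhds (e0 ▸ e.map_source h0)
  · exact AnalyticOnNhd.contDiffOn_of_completeSpace hsymm
  · rw [him]; exact e.open_source
  · rw [him]
    refine AnalyticOnNhd.contDiffOn_of_completeSpace fun q hq => ?_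
    have : (e : ℝ × ℝ → ℝ × ℝ) = fun q => (f q, k q) := funext he
    rw [this]
    exact (hsrc q hq).1.prod (hsrc q hq).2.1
  · rw [Real.ball_eq_Ioo]; simpa using hY
  intro y I hI hU _ hd hy hX1 Y hYd hYe x hx
  have evI : ∀ᶠ t in 𝓝 x, t ∈ I := hI.mem_nhds hx
  have jt : Jet2 (fun t : ℝ => t) x 1 0 :=
    Jet2.of_eventually (x1 := fun _ => 1) (Eventually.of_forall fun s => hasDerivAt_id' s)
      (hasDerivAt_const x 1)
  have jy : Jet2 y x (deriv y x) (B (x, y x, deriv y x)) := by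
    refine ⟨evI.mono fun t ht => (hd t ht).1, rfl, ?_⟩
    rw [← hy x hx]
    exact (hd x hx).2.hasDerivAt
  have anφ : ∀ p ∈ e.target, AnalyticAt ℝ (fun p => (e.symm p).1) p := fun p hp => by
    have := hsymm p hp
    fun_prop
  obtain ⟨X1, X2, jX⟩ : ∃ X1 X2, Jet2 (fun t => (e.symm (t, y t)).1) x X1 X2 :=
    ⟨_, _, jt.comp2 jy (anφ _ (hU x hx))⟩
  have hX1' : X1 ≠ 0 := by
    rw [← jX.2.1]; exact hX1 x hx
  have jY : Jet2 (fun t => Y ((e.symm (t, y t)).1)) x (deriv Y ((e.symm (x, y x)).1) * X1)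
      (deriv (deriv Y) ((e.symm (x, y x)).1) * X1 * X1 + deriv Y ((e.symm (x, y x)).1) * X2) := by
    have := Jet2.of_eventually (x := fun t => Y ((e.symm (t, y t)).1))
      (x1 := fun t => deriv Y ((e.symm (t, y t)).1) * deriv (fun t => (e.symm (t, y t)).1) t)
      (t := x) (b := deriv (deriv Y) ((e.symm (x, y x)).1) * X1 * X1
        + deriv Y ((e.symm (x, y x)).1) * X2) (by
        filter_upwards [evI, jX.1] with t ht hXt
        exact HasDerivAt.comp (h₂ := Y) t (hYd t ht).1.hasDerivAt hXt.hasDerivAt) (by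
        have h1 := HasDerivAt.comp (h₂ := deriv Y) x (hYd x hx).2.hasDerivAt jX.hasDerivAt
        have := h1.mul jX.2.2
        rw [jX.2.1] at this
        exact this)
    rwa [jX.2.1] at this
  have hpt : ∀ t ∈ I, ((e.symm (t, y t)).1, Y ((e.symm (t, y t)).1)) = e.symm (t, y t) := by
    intro t ht
    rw [hYe t ht]
  have hfk : ∀ t ∈ I, f ((e.symm (t, y t)).1, Y ((e.symm (t, y t)).1)) = t ∧
      k ((e.symm (t, y t)).1, Y ((e.symm (t, y t)).1)) = y t := by
    intro t ht
    rw [hpt t ht]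
    have := e.right_inv (hU t ht)
    rw [he] at this
    exact Prod.mk.inj this
  have hs := hsrc _ (e.map_target (hU x hx))
  rw [← hpt x hx] at hs
  have main := (jetT (B := B) jX jY hX1' hs.1 hs.2.1 hs.2.2
    (jt.congr (evI.mono fun t ht => (hfk t ht).1))
    (jy.congr (evI.mono fun t ht => (hfk t ht).2))).1 (by
      rw [(hfk x hx).1, (hfk x hx).2]; simp)
  rw [mul_div_cancel_right₀ _ hX1'] at main
  have h3 : X1 ^ 3 ≠ 0 := pow_ne_zero 3 hX1'
  apply mul_left_cancel₀ h3
  rw [← main]; ring
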